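/- arXiv:2208.05422 — 2 statements merged into one kernel-verified Lean document; each statement's English description precedes it below -/
import Mathlib

section
/- Assume char(F_q(t)) > 3 and let F(x) = Σ_{i=1}^6 F_i x_i^3 be a non-singular diagonal cubic form over F_q[t] in n = 6 variables, with dual form F*(c) = (∏F_i)^{2^{n−2}} ∏_± ((F_1^{-1}c_1^3)^{1/2} ± … ± (F_6^{-1}c_6^3)^{1/2}). Then the number of c ∈ F_q[t]^6 with F*(c) = 0 and |c| ≤ Ĉ is O_ε(Ĉ^{3+ε}). -/
open scoped Classical
open MeasureTheory

noncomputable section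

variable (Fq : Type) [Field Fq] [Fintype Fq]

/-- The absolute value on `K_∞ = F_q((t⁻¹))`, realised as formal Laurent series in
`X = t⁻¹`: for `α = Σ_{i ≤ M} α_i t^i` with `α_M ≠ 0` we have `|α| = q^M = q^(-order α)`. -/
def fabs (x : LaurentSeries Fq) : ℝ :=
  if x = 0 then 0 else (Fintype.card Fq : ℝ) ^ (-x.order : ℤ)

/-- The embedding of `O = F_q[t]` into `K_∞`, sending `t` to `X⁻¹`. -/
def polC (x : Polynomial Fq) : LaurentSeries Fq :=
  Polynomial.aeval (HahnSeries.single (-1 : ℤ) (1 : Fq)) x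

/-- `|x| = q^(deg x)` for `x ∈ F_q[t]` (with `|0| = 0`). -/
def fabsP (x : Polynomial Fq) : ℝ :=
  if x = 0 then 0 else (Fintype.card Fq : ℝ) ^ x.natDegree

/-- The standard additive character `ψ(α) = e(Tr_{F_q/F_p}(α_{-1})/p)` of `K_∞`,
where `α_{-1}` is the coefficient of `t⁻¹` in the Laurent expansion of `α`. -/
def psi (p : ℕ) [CharP Fq p] (α : LaurentSeries Fq) : ℂ :=
  letI := ZMod.algebra Fq p
  Complex.exp (2 * Real.pi * Complex.I *
    ((Algebra.trace (ZMod p) Fq (α.coeff 1)).val : ℂ) / p)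

/-- The canonical map `F_q[t] → K = F_q(t) → K̄`. -/
def amap (x : Polynomial Fq) : AlgebraicClosure (RatFunc Fq) :=
  algebraMap (RatFunc Fq) (AlgebraicClosure (RatFunc Fq))
    (algebraMap (Polynomial Fq) (RatFunc Fq) x)


theorem aux_count {α : Type*} : ∀ (n : ℕ) (S : Finset (Fin n → α)) (N : Fin n → ℝ),
    (∀ i, 0 ≤ N i) →
    (∀ i, ∀ c ∈ S, (((S.filter (fun c' => ∀ j < i, c' j = c j)).image (fun c' => c' i)).card : ℝ) ≤ N i) →
    (S.card : ℝ) ≤ ∏ i, N i := by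
  intro n
  induction n with
  | zero =>
    intro S N _ _
    have := Finset.card_le_one_of_subsingleton S
    simpa using this
  | succ n ih =>
    intro S N h0 h
    set T : Finset (Fin n → α) := S.image Fin.init with hT
    have h1 : (T.card : ℝ) ≤ ∏ i : Fin n, N i.castSucc := by
      apply ih _ _ (fun i => h0 _)
      intro i c hc
      obtain ⟨c0, hc0, rfl⟩ := Finset.mem_image.1 hc
      refine le_trans ?_ (h i.castSucc c0 hc0)
      norm_cast
      apply Finset.card_le_card
      intro x hx
      simp only [Finset.mem_image, Finset.mem_filter, hT] at hx ⊢
      obtain ⟨_, ⟨⟨c1, hc1, rfl⟩, h2⟩, rfl⟩ := hx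
      refine ⟨c1, ⟨hc1, ?_⟩, rfl⟩
      intro j hj
      have hjn : (j : ℕ) < n := lt_trans (Fin.lt_def.1 hj) i.2
      exact h2 ⟨j, hjn⟩ hj
    have h2 : (S.card : ℝ) ≤ N (Fin.last n) * T.card := by
      rw [Finset.card_eq_sum_card_image Fin.init S]
      push_cast
      rw [mul_comm, ← nsmul_eq_mul]
      apply Finset.sum_le_card_nsmul
      intro b hb
      obtain ⟨c0, hc0, rfl⟩ := Finset.mem_image.1 hb
      refine le_trans ?_ (h (Fin.last n) c0 hc0)
      norm_cast
      rw [← Finset.card_image_of_injOn (f := fun c : Fin (n+1) → α => c (Fin.last n))]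
      · apply Finset.card_le_card
        apply Finset.image_subset_image
        intro c hc
        simp only [Finset.mem_filter] at hc ⊢
        refine ⟨hc.1, fun j hj => ?_⟩
        have := congrFun hc.2 ⟨j, hj⟩
        exact this
      · intro a ha b hb hab
        simp only [Finset.coe_filter, Set.mem_ofPred_eq] at ha hb
        rw [← Fin.snoc_init_self a, ← Fin.snoc_init_self b, ha.2, hb.2]
        simp only at hab
        rw [hab]
    rw [Fin.prod_univ_castSucc]
    calc (S.card : ℝ) ≤ N (Fin.last n) * T.card := h2
      _ ≤ N (Fin.last n) * ∏ i : Fin n, N i.castSucc := mul_le_mul_of_nonneg_left h1 (h0 _)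
      _ = _ := mul_comm _ _

theorem aux_flip {K L : Type*} [Field K] [Field L] [Algebra K L] [Normal K L]
    (y : L) (a : K) (hy : y ^ 2 = algebraMap K L a) (hn : y ∉ Set.range (algebraMap K L)) :
    ∃ σ : L ≃ₐ[K] L, σ y = - y := by
  have hint : IsIntegral K y := Normal.isIntegral inferInstance y
  have hirr : minpoly K y = Polynomial.X ^ 2 - Polynomial.C a := by
    symm
    have hm : (Polynomial.X ^ 2 - Polynomial.C a : Polynomial K).Monic :=
      Polynomial.monic_X_pow_sub_C a two_ne_zero
    refine minpoly.unique' K y hm (by simp [hy]) ?_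
    intro q hq
    by_cases h0 : q = 0
    · exact Or.inl h0
    right
    intro hq0
    rw [Polynomial.degree_X_pow_sub_C (by norm_num)] at hq
    have h1 : minpoly K y ∣ q := minpoly.dvd K y hq0
    have h2 : (minpoly K y).natDegree ≤ q.natDegree := Polynomial.natDegree_le_of_dvd h1 h0
    have h3 : q.natDegree < 2 := by
      rw [Polynomial.natDegree_lt_iff_degree_lt h0]; exact hq
    have h4 : (minpoly K y).natDegree = 1 := by
      have := minpoly.natDegree_pos hint
      omega
    apply hn
    exact minpoly.natDegree_eq_one_iff.1 h4
  have hc : IsConjRoot K (-y) y := by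
    apply IsConjRoot.symm
    rw [isConjRoot_iff_aeval_eq_zero hint, hirr]
    simp [hy]
  obtain ⟨σ, hσ⟩ := isConjRoot_iff_exists_algEquiv.1 hc
  exact ⟨σ, hσ⟩

theorem aux_indep {K L ι : Type*} [Field K] [Field L] [Algebra K L] [Normal K L]
    (h2 : (2 : L) ≠ 0)
    (s : ι → L) (hs : ∀ i, ∃ a : K, s i ^ 2 = algebraMap K L a) (j : ι) :
    ∀ (n : ℕ) (T : Finset ι), T.card = n → ∑ i ∈ T, s i = 0 → j ∈ T →
      ∑ i ∈ T.filter (fun i => s i * s j ∈ Set.range (algebraMap K L)), s i = 0 := by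
  intro n
  induction n using Nat.strong_induction_on with
  | _ n ih =>
  intro T hT hsum hj
  by_cases hall : ∀ i ∈ T, s i * s j ∈ Set.range (algebraMap K L)
  · rw [Finset.filter_true_of_mem hall]; exact hsum
  push Not at hall
  obtain ⟨i0, hi0, hn⟩ := hall
  have hprod : ∃ a : K, (s i0 * s j) ^ 2 = algebraMap K L a := by
    obtain ⟨a, ha⟩ := hs i0
    obtain ⟨b, hb⟩ := hs j
    exact ⟨a * b, by rw [mul_pow, ha, hb, map_mul]⟩
  obtain ⟨a, ha⟩ := hprod
  obtain ⟨σ, hσ⟩ := aux_flip _ a ha hn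
  have hne : s i0 * s j ≠ 0 := fun h => hn ⟨0, by rw [h, map_zero]⟩
  have hsj : s j ≠ 0 := right_ne_zero_of_mul hne
  have hsgn : ∀ i, σ (s i) = s i ∨ σ (s i) = - s i := by
    intro i
    obtain ⟨b, hb⟩ := hs i
    apply sq_eq_sq_iff_eq_or_eq_neg.1
    rw [← map_pow, hb, σ.commutes]
  obtain ⟨e, he, hej⟩ : ∃ e : L, (e = 1 ∨ e = -1) ∧ σ (s j) = e * s j := by
    rcases hsgn j with h | h
    · exact ⟨1, Or.inl rfl, by rw [h, one_mul]⟩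
    · exact ⟨-1, Or.inr rfl, by rw [h]; ring⟩
  have hee : e * e = 1 := by rcases he with h | h <;> rw [h] <;> ring
  set T' := T.filter (fun i => σ (s i) = e * s i) with hT'
  have hsum' : ∑ i ∈ T', s i = 0 := by
    have h3 : ∑ i ∈ T, (σ (s i) + e * s i) = 0 := by
      rw [Finset.sum_add_distrib, ← map_sum, ← Finset.mul_sum, hsum]; simp
    have h4 : ∑ i ∈ T, (σ (s i) + e * s i) = ∑ i ∈ T', (2 * e) * s i := by
      rw [hT', Finset.sum_filter]
      apply Finset.sum_congr rfl
      intro i _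
      split_ifs with h
      · rw [h]; ring
      · rcases hsgn i with h5 | h5 <;> rcases he with h6 | h6 <;> rw [h5, h6] at h ⊢ <;>
          first | (exfalso; apply h; ring1) | ring1
    rw [h4, ← Finset.mul_sum] at h3
    rcases mul_eq_zero.1 h3 with h5 | h5
    · exfalso
      rcases mul_eq_zero.1 h5 with h6 | h6
      · exact h2 h6
      · rw [h6] at hee; simp at hee
    · exact h5
  have hi0' : i0 ∉ T' := by
    intro h
    have h3 := (Finset.mem_filter.1 h).2
    rw [map_mul, h3, hej] at hσ
    have : 2 * (s i0 * s j) = 0 := by linear_combination hσ - (s i0 * s j) * hee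
    rcases mul_eq_zero.1 this with h6 | h6
    · exact h2 h6
    · exact hne h6
  have hlt : T'.card < n := by
    rw [← hT]
    apply Finset.card_lt_card
    refine ⟨Finset.filter_subset _ _, fun h => hi0' (h hi0)⟩
  have := ih _ hlt T' rfl hsum' (Finset.mem_filter.2 ⟨hj, hej⟩)
  rw [← this]
  apply Finset.sum_congr _ (fun _ _ => rfl)
  ext i
  simp only [Finset.mem_filter, hT']
  constructor
  · rintro ⟨h3, h4⟩
    refine ⟨⟨h3, ?_⟩, h4⟩
    obtain ⟨k, hk⟩ := h4
    have h5 : σ (s i * s j) = s i * s j := by rw [← hk, σ.commutes]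
    rw [map_mul, hej] at h5
    apply mul_right_cancel₀ hsj
    linear_combination e * h5 - σ (s i) * s j * hee
  · rintro ⟨⟨h3, _⟩, h4⟩; exact ⟨h3, h4⟩


theorem aux_pat {α β : Type*} [Fintype β] (S : Finset α) (f : α → β) (b : ℝ)
    (h : ∀ r, ((S.filter (fun a => f a = r)).card : ℝ) ≤ b) :
    (S.card : ℝ) ≤ Fintype.card β * b := by
  rw [Finset.card_eq_sum_card_fiberwise (f := f) (t := Finset.univ)
    (fun _ _ => Finset.mem_coe.2 (Finset.mem_univ _))]
  push_cast
  rw [← nsmul_eq_mul]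
  apply Finset.sum_le_card_nsmul
  intro r _
  exact h r

theorem aux_weight {n : ℕ} (R : Fin n → Fin n → Prop) (hsymm : ∀ i j, R i j → R j i)
    (htrans : ∀ i j k, R i j → R j k → R i k) :
    ∑ i, (if ¬ ∃ j, i < j ∧ R i j then 0 else if ∃ j, j < i ∧ R i j then 1 else 2) ≤ n := by
  set A : Finset (Fin n) := Finset.univ.filter (fun i => ¬ ∃ j, i < j ∧ R i j) with hA
  set B : Finset (Fin n) :=
    Finset.univ.filter (fun i => (∃ j, i < j ∧ R i j) ∧ ¬ ∃ j, j < i ∧ R i j) with hB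
  have hBA : B.card ≤ A.card := by
    have hex : ∀ i ∈ B, ∃ m, R i m ∧ ∀ j, R i j → j ≤ m := by
      intro i hi
      obtain ⟨⟨j, _, hj⟩, _⟩ := (Finset.mem_filter.1 hi).2
      obtain ⟨m, hm, hmax⟩ := Finset.exists_max_image (Finset.univ.filter (fun j => R i j)) id
        ⟨j, by simpa using hj⟩
      exact ⟨m, (Finset.mem_filter.1 hm).2, fun j hj => hmax j (by simpa using hj)⟩
    choose! g hg hgmax using hex
    apply Finset.card_le_card_of_injOn g
    · intro i hi
      simp only [hA, Finset.coe_filter, Finset.mem_univ, true_and, Set.mem_ofPred_eq]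
      rintro ⟨j, hlt, hj⟩
      exact absurd (hgmax i hi j (htrans _ _ _ (hg i hi) hj)) (not_le.2 hlt)
    · intro i hi i' hi' h
      have hR : R i i' := htrans _ _ _ (hg i hi) (h ▸ hsymm _ _ (hg i' hi'))
      have h1 := (Finset.mem_filter.1 hi).2.2
      have h2 := (Finset.mem_filter.1 hi').2.2
      rcases lt_trichotomy i i' with h3 | h3 | h3
      · exact absurd ⟨i, h3, hsymm _ _ hR⟩ h2
      · exact h3
      · exact absurd ⟨i', h3, hR⟩ h1
  have key : ∑ i, (if ¬ ∃ j, i < j ∧ R i j then 0 else if ∃ j, j < i ∧ R i j then 1 else 2)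
      + A.card = n + B.card := by
    rw [hA, hB, Finset.card_filter, Finset.card_filter, ← Finset.sum_add_distrib]
    have : n = ∑ i : Fin n, 1 := by simp
    refine Eq.trans ?_ (congrArg (· + _) this.symm)
    rw [← Finset.sum_add_distrib]
    apply Finset.sum_congr rfl
    intro i _
    by_cases h1 : ∃ j, i < j ∧ R i j <;> by_cases h2 : ∃ j, j < i ∧ R i j <;> simp only [h1, h2] <;> simp
  omega

theorem aux_polyset (C : ℕ) : ∃ P : Finset (Polynomial Fq),
    (∀ f : Polynomial Fq, f.natDegree ≤ C → f ∈ P) ∧ P.card ≤ Fintype.card Fq ^ (C + 1) := by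
  refine ⟨Finset.univ.image
    (fun a : Fin (C + 1) → Fq => (((Polynomial.degreeLTEquiv Fq (C + 1)).symm a : _) : Polynomial Fq)),
    ?_, ?_⟩
  · intro f hf
    have hm : f ∈ Polynomial.degreeLT Fq (C + 1) := by
      rw [Polynomial.mem_degreeLT]
      refine lt_of_le_of_lt Polynomial.degree_le_natDegree ?_
      exact_mod_cast Nat.lt_succ_of_le hf
    refine Finset.mem_image.2 ⟨Polynomial.degreeLTEquiv Fq (C + 1) ⟨f, hm⟩, Finset.mem_univ _, ?_⟩
    simp
  · refine Finset.card_image_le.trans ?_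
    simp

theorem aux_sq_trans (x y z : Polynomial Fq) (hy : y ≠ 0) (h1 : IsSquare (x * y))
    (h2 : IsSquare (y * z)) : IsSquare (x * z) := by
  obtain ⟨u, hu⟩ := h1
  obtain ⟨v, hv⟩ := h2
  have h3 : y ^ 2 ∣ (u * v) ^ 2 := ⟨x * z, by linear_combination (-y * z) * hu - u * u * hv⟩
  have h4 : y ∣ u * v := (IsIntegrallyClosed.pow_dvd_pow_iff two_ne_zero).1 h3
  obtain ⟨w, hw⟩ := h4
  refine ⟨w, ?_⟩
  apply mul_left_cancel₀ (pow_ne_zero 2 hy)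
  linear_combination (y * z) * hu + u * u * hv + (u * v + y * w) * hw

theorem aux_sq_count (C : ℕ) (a : Polynomial Fq) (ha : a ≠ 0) (A : Finset (Polynomial Fq))
    (hA : ∀ x ∈ A, x ≠ 0 ∧ x.natDegree ≤ C ∧ IsSquare (a * x)) :
    A.card ≤ Fintype.card Fq ^ (C / 2 + 1) := by
  obtain ⟨d, ⟨hd0, hd⟩, hmin⟩ := exists_minimalFor_of_wellFoundedLT
    (fun x : Polynomial Fq => x ≠ 0 ∧ IsSquare (a * x)) (fun x => x.natDegree) ⟨a, ha, a, rfl⟩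
  have hsf : Squarefree d := by
    rintro p ⟨e, he⟩
    have hp0 : p ≠ 0 := by rintro rfl; simp at he; exact hd0 he
    have he0 : e ≠ 0 := by rintro rfl; simp at he; exact hd0 he
    have hesq : IsSquare (a * e) := by
      apply aux_sq_trans Fq a d e hd0 hd
      exact ⟨p * e, by rw [he]; ring⟩
    have hle : e.natDegree ≤ d.natDegree := by
      rw [he, Polynomial.natDegree_mul (mul_ne_zero hp0 hp0) he0]; omega
    have := hmin ⟨he0, hesq⟩ hle
    simp only at this
    rw [he, Polynomial.natDegree_mul (mul_ne_zero hp0 hp0) he0, Polynomial.natDegree_mul hp0 hp0]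
      at this
    rw [Polynomial.isUnit_iff_degree_eq_zero, Polynomial.degree_eq_natDegree hp0]
    have : p.natDegree = 0 := by omega
    rw [this]; rfl
  obtain ⟨P, hP, hPc⟩ := aux_polyset Fq (C / 2)
  have hsub : A ⊆ P.image (fun f => d * f ^ 2) := by
    intro x hx
    obtain ⟨hx0, hxd, hxs⟩ := hA x hx
    obtain ⟨h, hh⟩ := aux_sq_trans Fq d a x ha (by rwa [mul_comm]) hxs
    have hdh : d ∣ h := by
      rw [← hsf.dvd_pow_iff_dvd (n := 2) two_ne_zero]
      exact ⟨x, by rw [hh]; ring⟩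
    obtain ⟨f, rfl⟩ := hdh
    have hxf : x = d * f ^ 2 := by
      apply mul_left_cancel₀ hd0
      rw [hh]; ring
    have hf0 : f ≠ 0 := by rintro rfl; simp at hxf; exact hx0 hxf
    refine Finset.mem_image.2 ⟨f, hP f ?_, hxf.symm⟩
    rw [hxf, Polynomial.natDegree_mul hd0 (pow_ne_zero 2 hf0), Polynomial.natDegree_pow] at hxd
    omega
  exact (Finset.card_le_card hsub).trans (Finset.card_image_le.trans hPc)

def auxHom : Polynomial Fq →+* AlgebraicClosure (RatFunc Fq) :=
  (algebraMap (RatFunc Fq) (AlgebraicClosure (RatFunc Fq))).comp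
    (algebraMap (Polynomial Fq) (RatFunc Fq))

theorem auxHom_inj : Function.Injective (auxHom Fq) :=
  (algebraMap (RatFunc Fq) (AlgebraicClosure (RatFunc Fq))).injective.comp
    (IsFractionRing.injective (Polynomial Fq) (RatFunc Fq))

theorem aux_range_iff (f g c d : Polynomial Fq) (hf : f ≠ 0) (hg : g ≠ 0) (hc : c ≠ 0) (hd : d ≠ 0)
    (s r : AlgebraicClosure (RatFunc Fq))
    (hs : s ^ 2 = (auxHom Fq f)⁻¹ * auxHom Fq c ^ 3)
    (hr : r ^ 2 = (auxHom Fq g)⁻¹ * auxHom Fq d ^ 3) :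
    s * r ∈ Set.range (algebraMap (RatFunc Fq) (AlgebraicClosure (RatFunc Fq))) ↔
      IsSquare (f * c * (g * d)) := by
  have hne : ∀ x, x ≠ 0 → auxHom Fq x ≠ 0 := fun x hx => (map_ne_zero_iff _ (auxHom_inj Fq)).2 hx
  have hf' := hne f hf
  have hg' := hne g hg
  have hc' := hne c hc
  have hd' := hne d hd
  have hsr : (s * r * (auxHom Fq (f * g)) / auxHom Fq (c * d)) ^ 2 = auxHom Fq (f * c * (g * d)) := by
    rw [div_pow, mul_pow, mul_pow, hs, hr]
    simp only [map_mul]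
    field_simp
  constructor
  · rintro ⟨k, hk⟩
    have h1 : (k * algebraMap (Polynomial Fq) (RatFunc Fq) (f * g) /
        algebraMap (Polynomial Fq) (RatFunc Fq) (c * d)) ^ 2 =
        algebraMap (Polynomial Fq) (RatFunc Fq) (f * c * (g * d)) := by
      apply (algebraMap (RatFunc Fq) (AlgebraicClosure (RatFunc Fq))).injective
      rw [map_pow, map_div₀, map_mul, hk]
      exact hsr
    obtain ⟨y, hy⟩ := IsIntegrallyClosed.exists_algebraMap_eq_of_isIntegral_pow
      (R := Polynomial Fq) (K := RatFunc Fq) (n := 2) two_pos (by rw [h1]; exact isIntegral_algebraMap)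
    refine ⟨y, ?_⟩
    apply IsFractionRing.injective (Polynomial Fq) (RatFunc Fq)
    rw [← h1, ← hy, map_mul, sq]
  · rintro ⟨y, hy⟩
    rw [hy, ← sq, map_pow] at hsr
    have hcd : auxHom Fq (c * d) ≠ 0 := hne _ (mul_ne_zero hc hd)
    have hfg : auxHom Fq (f * g) ≠ 0 := hne _ (mul_ne_zero hf hg)
    have hmem : ∀ x, auxHom Fq x ∈
        (algebraMap (RatFunc Fq) (AlgebraicClosure (RatFunc Fq))).fieldRange := fun x => ⟨_, rfl⟩
    rw [← RingHom.coe_fieldRange]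
    have h2 : ∀ z, s * r * (auxHom Fq (f * g)) / auxHom Fq (c * d) = z →
        s * r = z * auxHom Fq (c * d) / auxHom Fq (f * g) := by
      rintro z rfl
      field_simp
    rcases sq_eq_sq_iff_eq_or_eq_neg.1 hsr with h | h
    · rw [h2 _ h]
      exact div_mem (mul_mem (hmem _) (hmem _)) (hmem _)
    · rw [h2 _ h]
      exact div_mem (mul_mem (neg_mem (hmem _)) (hmem _)) (hmem _)

def auxR (F c : Fin 6 → Polynomial Fq) (i j : Fin 6) : Prop :=
  c i ≠ 0 ∧ c j ≠ 0 ∧ IsSquare (F i * c i * (F j * c j))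

theorem aux_class (hchar : 3 < ringChar Fq) (F c : Fin 6 → Polynomial Fq) (hF : ∀ i, F i ≠ 0)
    (s : Fin 6 → AlgebraicClosure (RatFunc Fq))
    (hs : ∀ i, s i ^ 2 = (auxHom Fq (F i))⁻¹ * auxHom Fq (c i) ^ 3)
    (hsum : ∑ i, s i = 0) (i : Fin 6) :
    ∑ j ∈ Finset.univ.filter (fun j => auxR Fq F c i j), s j = 0 := by
  by_cases hi : c i = 0
  · rw [Finset.filter_false_of_mem (fun j _ h => h.1 hi)]; simp
  have h2 : (2 : AlgebraicClosure (RatFunc Fq)) ≠ 0 := by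
    have h2q : (2 : Fq) ≠ 0 := by
      intro h
      have : ((2 : ℕ) : Fq) = 0 := by exact_mod_cast h
      have := (ringChar.spec Fq 2).1 this
      have := Nat.le_of_dvd two_pos this
      omega
    have h3 : (Polynomial.C (2 : Fq)) ≠ 0 := by simpa using h2q
    have h4 := (map_ne_zero_iff _ (auxHom_inj Fq)).2 h3
    rwa [show (Polynomial.C (2 : Fq)) = 2 from rfl, map_ofNat] at h4
  have hK : ∀ i, ∃ a : RatFunc Fq, s i ^ 2 = algebraMap _ (AlgebraicClosure (RatFunc Fq)) a := by
    intro i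
    refine ⟨(algebraMap _ (RatFunc Fq) (F i))⁻¹ * (algebraMap _ (RatFunc Fq) (c i)) ^ 3, ?_⟩
    rw [hs i, map_mul, map_inv₀, map_pow]
    rfl
  have := aux_indep h2 s hK i _ Finset.univ rfl hsum (Finset.mem_univ i)
  rw [← this, Finset.sum_filter, Finset.sum_filter]
  apply Finset.sum_congr rfl
  intro j _
  by_cases hj : c j = 0
  · have : s j = 0 := by
      have := hs j
      rw [hj] at this
      simpa using this
    simp [this]
  · have h5 := aux_range_iff Fq (F i) (F j) (c i) (c j) (hF i) (hF j) hi hj _ _ (hs i) (hs j)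
    have h6 : auxR Fq F c i j ↔
        s j * s i ∈ Set.range (algebraMap (RatFunc Fq) (AlgebraicClosure (RatFunc Fq))) := by
      rw [mul_comm, h5]
      exact ⟨fun h => h.2.2, fun h => ⟨hi, hj, h⟩⟩
    simp only [h6]

theorem aux_cube (f : Polynomial Fq) (hf : f ≠ 0)
    {ι : Type*} [Fintype ι] (v : ι → AlgebraicClosure (RatFunc Fq)) (A : Finset (Polynomial Fq))
    (hA : ∀ x ∈ A, ∃ e : ι, (v e) ^ 2 = (auxHom Fq f)⁻¹ * auxHom Fq x ^ 3) :
    A.card ≤ 3 * Fintype.card ι := by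
  have hf' : auxHom Fq f ≠ 0 := (map_ne_zero_iff _ (auxHom_inj Fq)).2 hf
  rw [← Finset.card_image_of_injective A (auxHom_inj Fq)]
  have hsub : A.image (auxHom Fq) ⊆ Finset.univ.biUnion (fun e : ι =>
      (Polynomial.nthRoots 3 (auxHom Fq f * v e ^ 2)).toFinset) := by
    intro y hy
    obtain ⟨x, hx, rfl⟩ := Finset.mem_image.1 hy
    obtain ⟨e, he⟩ := hA x hx
    refine Finset.mem_biUnion.2 ⟨e, Finset.mem_univ _, ?_⟩
    rw [Multiset.mem_toFinset, Polynomial.mem_nthRoots (by norm_num), he]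
    field_simp
  refine (Finset.card_le_card hsub).trans (Finset.card_biUnion_le.trans ?_)
  rw [mul_comm, ← smul_eq_mul, Fintype.card]
  apply Finset.sum_le_card_nsmul
  intro e _
  exact (Multiset.toFinset_card_le _).trans (Polynomial.card_nthRoots _ _)

theorem aux_fiber (hchar : 3 < ringChar Fq) (F : Fin 6 → Polynomial Fq) (hF : ∀ i, F i ≠ 0)
    (C : ℕ) (R : Fin 6 → Fin 6 → Prop) (S : Finset (Fin 6 → Polynomial Fq))
    (hS : ∀ c ∈ S, auxR Fq F c = R ∧ (∀ i, (c i).natDegree ≤ C) ∧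
      ∃ s : Fin 6 → AlgebraicClosure (RatFunc Fq),
            (∀ i, s i ^ 2 = (auxHom Fq (F i))⁻¹ * auxHom Fq (c i) ^ 3) ∧
            ∑ i, s i = 0) :
    (S.card : ℝ) ≤ (192 * (Fintype.card Fq : ℝ)) ^ 6 * ((Fintype.card Fq : ℝ) ^ C) ^ 3 := by
  have hq1 : (1 : ℝ) ≤ Fintype.card Fq := by exact_mod_cast Fintype.card_pos
  set q : ℝ := (Fintype.card Fq : ℝ) with hq
  set B : ℝ := Real.sqrt q ^ C with hB
  have hsq : Real.sqrt q ^ 2 = q := Real.sq_sqrt (by linarith)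
  have hsq1 : 1 ≤ Real.sqrt q := Real.one_le_sqrt.2 hq1
  have hB1 : 1 ≤ B := one_le_pow₀ hsq1
  have hBC : B ^ 2 = q ^ C := by rw [hB, ← pow_mul, mul_comm, pow_mul, hsq]
  have hBh : q ^ (C / 2) ≤ B := by
    rw [hB]
    nth_rewrite 1 [← hsq]
    rw [← pow_mul]
    exact pow_le_pow_right₀ hsq1 (Nat.mul_div_le C 2)
  clear_value B
  rcases S.eq_empty_or_nonempty with rfl | ⟨c0, hc0⟩
  · simp only [Finset.card_empty, Nat.cast_zero]; positivity
  have hR0 := (hS c0 hc0).1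
  have hsymm : ∀ i j, R i j → R j i := by
    rw [← hR0]
    rintro i j ⟨h1, h2, h3⟩
    exact ⟨h2, h1, by rwa [mul_comm]⟩
  have htrans : ∀ i j k, R i j → R j k → R i k := by
    rw [← hR0]
    rintro i j k ⟨h1, h2, h3⟩ ⟨_, h4, h5⟩
    exact ⟨h1, h4, aux_sq_trans Fq _ _ _ (mul_ne_zero (hF j) h2) h3 h5⟩
  set w : Fin 6 → ℕ := fun i =>
    (if ¬ ∃ j, i < j ∧ R i j then 0 else if ∃ j, j < i ∧ R i j then 1 else 2) with hw
  have hwsum : ∑ i, w i ≤ 6 := aux_weight R hsymm htrans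
  have hcount := aux_count 6 S (fun i => 192 * q * B ^ w i) (fun i => by positivity) ?_
  · refine hcount.trans ?_
    rw [Finset.prod_mul_distrib, Finset.prod_pow_eq_pow_sum]
    simp only [Finset.prod_const, Finset.card_univ, Fintype.card_fin]
    rw [← hBC, ← pow_mul]
    exact mul_le_mul_of_nonneg_left (pow_le_pow_right₀ hB1 hwsum) (by positivity)
  intro i c hc
  set X := (S.filter (fun c' => ∀ j < i, c' j = c j)).image (fun c' => c' i) with hX
  have hXmem : ∀ x ∈ X, ∃ c' ∈ S, (∀ j < i, c' j = c j) ∧ c' i = x := by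
    intro x hx
    obtain ⟨c', h1, h2⟩ := Finset.mem_image.1 hx
    obtain ⟨h3, h4⟩ := Finset.mem_filter.1 h1
    exact ⟨c', h3, h4, h2⟩
  suffices hgoal : (X.card : ℝ) ≤ 192 * q * B ^ w i by
    convert hgoal
  by_cases hlast : ¬ ∃ j, i < j ∧ R i j
  · have hwi : w i = 0 := by rw [hw]; exact if_pos hlast
    simp only [hwi]
    -- last element of its class: it is determined up to boundedly many choices
    obtain ⟨s, hs, hsum⟩ := (hS c hc).2.2
    have hcard := aux_cube Fq (F i) (hF i)
      (fun e : Fin 6 → Bool => ∑ j ∈ Finset.univ.filter (fun j => j < i ∧ R i j),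
        (if e j then s j else - s j)) X ?_
    · simp only [Fintype.card_pi, Fintype.card_bool, Finset.prod_const, Finset.card_univ,
        Fintype.card_fin] at hcard
      have : (X.card : ℝ) ≤ 192 := by exact_mod_cast hcard
      rw [pow_zero]
      linarith
    intro x hx
    obtain ⟨c', hc', hagree, rfl⟩ := hXmem x hx
    obtain ⟨s', hs', hsum'⟩ := (hS c' hc').2.2
    refine ⟨fun j => decide (s' j = s j), ?_⟩
    rw [← hs' i]
    have hcl := aux_class Fq hchar F c' hF s' hs' hsum' i
    rw [(hS c' hc').1] at hcl
    have heq : ∑ j ∈ Finset.univ.filter (fun j => j < i ∧ R i j),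
        (if decide (s' j = s j) = true then s j else - s j) =
        ∑ j ∈ Finset.univ.filter (fun j => j < i ∧ R i j), s' j := by
      apply Finset.sum_congr rfl
      intro j hj
      have hji := (Finset.mem_filter.1 hj).2.1
      have h1 : s' j ^ 2 = s j ^ 2 := by rw [hs', hs, hagree j hji]
      by_cases h : s' j = s j
      · simp [h]
      · simp only [h, decide_false]
        rcases sq_eq_sq_iff_eq_or_eq_neg.1 h1 with h2 | h2
        · exact absurd h2 h
        · simp [h2]
    rw [heq]
    by_cases hii : R i i
    · have hins : Finset.univ.filter (fun j => R i j) =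
          insert i (Finset.univ.filter (fun j => j < i ∧ R i j)) := by
        ext j
        simp only [Finset.mem_filter, Finset.mem_univ, true_and, Finset.mem_insert]
        constructor
        · intro h
          rcases lt_trichotomy i j with h3 | h3 | h3
          · exact absurd ⟨j, h3, h⟩ hlast
          · exact Or.inl h3.symm
          · exact Or.inr ⟨h3, h⟩
        · rintro (rfl | h)
          · exact hii
          · exact h.2
      rw [hins, Finset.sum_insert (by simp)] at hcl
      rw [eq_neg_of_add_eq_zero_left hcl, neg_sq]
    · have hci : c' i = 0 := by
        by_contra h0
        apply hii
        rw [← (hS c' hc').1]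
        exact ⟨h0, h0, _, rfl⟩
      have hsi : s' i = 0 := by
        have := hs' i
        rw [hci] at this
        simpa using this
      have hemp : Finset.univ.filter (fun j => j < i ∧ R i j) = ∅ := by
        apply Finset.filter_false_of_mem
        rintro j _ ⟨_, h⟩
        exact hii (htrans _ _ _ h (hsymm _ _ h))
      rw [hemp, hsi]; simp
  by_cases hmid : ∃ j, j < i ∧ R i j
  · have hwi : w i = 1 := by rw [hw]; exact (if_neg hlast).trans (if_pos hmid)
    simp only [hwi]
    -- middle element
    obtain ⟨j, hji, hj⟩ := hmid
    have hcR : auxR Fq F c i j := by rw [(hS c hc).1]; exact hj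
    have hcard := aux_sq_count Fq C (F i * (F j * c j))
      (mul_ne_zero (hF i) (mul_ne_zero (hF j) hcR.2.1)) X ?_
    · have h1 : (X.card : ℝ) ≤ q ^ (C / 2 + 1) := by rw [hq]; exact_mod_cast hcard
      rw [pow_succ] at h1
      have h2 : q ^ (C / 2) * q ≤ B * q := by gcongr
      have h3 : 0 ≤ B * q := by positivity
      rw [pow_one]
      nlinarith
    intro x hx
    obtain ⟨c', hc', hagree, rfl⟩ := hXmem x hx
    have hcR' : auxR Fq F c' i j := by rw [(hS c' hc').1]; exact hj
    refine ⟨hcR'.1, (hS c' hc').2.1 i, ?_⟩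
    have h4 := hcR'.2.2
    rw [hagree j hji] at h4
    convert h4 using 1
    ring
  · have hwi : w i = 2 := by rw [hw]; exact (if_neg hlast).trans (if_neg hmid)
    simp only [hwi]
    -- first element
    obtain ⟨P, hP, hPc⟩ := aux_polyset Fq C
    have hsub : X ⊆ P := by
      intro x hx
      obtain ⟨c', hc', hagree, rfl⟩ := hXmem x hx
      exact hP _ ((hS c' hc').2.1 i)
    have hcard := (Finset.card_le_card hsub).trans hPc
    have h1 : (X.card : ℝ) ≤ q ^ (C + 1) := by rw [hq]; exact_mod_cast hcard
    rw [hBC]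
    rw [pow_succ] at h1
    have h3 : 0 ≤ q ^ C * q := by positivity
    nlinarith

/-- For a non-singular diagonal cubic in 6 variables over `F_q[t]` with
`char F_q(t) > 3`, the number of zeros of the dual form `F*` of height at most
`Ĉ = q^C` is `O_ε(Ĉ^{3+ε})`. A zero of `F*` is a `c` admitting square roots
`sᵢ² = Fᵢ⁻¹ cᵢ³` (in the algebraic closure) with `Σ sᵢ = 0`. -/
theorem dual_form_count_six_variables
    (hchar : 3 < ringChar Fq)
    (F : Fin 6 → Polynomial Fq) (hF : ∀ i, F i ≠ 0)
    (ε : ℝ) (hε : 0 < ε) :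
    ∃ K : ℝ, 0 < K ∧ ∀ Cexp : ℕ,
      (Nat.card {c : Fin 6 → Polynomial Fq //
          (∀ i, fabsP Fq (c i) ≤ (Fintype.card Fq : ℝ) ^ Cexp) ∧
          ∃ s : Fin 6 → AlgebraicClosure (RatFunc Fq),
            (∀ i, s i ^ 2 = (amap Fq (F i))⁻¹ * amap Fq (c i) ^ 3) ∧
            ∑ i, s i = 0} : ℝ)
        ≤ K * ((Fintype.card Fq : ℝ) ^ Cexp) ^ ((3 : ℝ) + ε) := by
  have hq : 1 < Fintype.card Fq := Fintype.one_lt_card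
  have hq1 : (1 : ℝ) < Fintype.card Fq := by exact_mod_cast hq
  refine ⟨(Fintype.card (Fin 6 → Fin 6 → Prop) : ℝ) * (192 * (Fintype.card Fq : ℝ)) ^ 6,
    by positivity, fun C => ?_⟩
  obtain ⟨P, hP, -⟩ := aux_polyset Fq C
  have hdeg : ∀ f : Polynomial Fq, fabsP Fq f ≤ (Fintype.card Fq : ℝ) ^ C → f.natDegree ≤ C := by
    intro f hf
    by_cases h0 : f = 0
    · simp [h0]
    · rw [fabsP, if_neg h0] at hf
      exact (pow_le_pow_iff_right₀ hq1).1 hf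
  set p : (Fin 6 → Polynomial Fq) → Prop := fun c =>
    (∀ i, fabsP Fq (c i) ≤ (Fintype.card Fq : ℝ) ^ C) ∧
          ∃ s : Fin 6 → AlgebraicClosure (RatFunc Fq),
            (∀ i, s i ^ 2 = (amap Fq (F i))⁻¹ * amap Fq (c i) ^ 3) ∧
            ∑ i, s i = 0 with hp
  set S : Finset (Fin 6 → Polynomial Fq) := (Fintype.piFinset fun _ => P).filter p with hS
  have hcard : Nat.card {c // p c} = S.card := by
    apply Nat.subtype_card
    intro c
    rw [hS, Finset.mem_filter, Fintype.mem_piFinset]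
    exact ⟨fun h => h.2, fun h => ⟨fun i => hP _ (hdeg _ (h.1 i)), h⟩⟩
  have hmain : (S.card : ℝ) ≤ (Fintype.card (Fin 6 → Fin 6 → Prop) : ℝ) *
      ((192 * (Fintype.card Fq : ℝ)) ^ 6 * ((Fintype.card Fq : ℝ) ^ C) ^ 3) := by
    apply aux_pat S (auxR Fq F)
    intro R
    apply aux_fiber Fq hchar F hF C R
    intro c hc
    rw [@Finset.mem_filter] at hc
    obtain ⟨h1, h2⟩ := hc
    obtain ⟨_, h3, h4⟩ := Finset.mem_filter.1 h1
    exact ⟨h2, fun i => hdeg _ (h3 i), h4⟩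
  have hle : ((Fintype.card Fq : ℝ) ^ C) ^ 3 ≤ ((Fintype.card Fq : ℝ) ^ C) ^ ((3 : ℝ) + ε) := by
    rw [← Real.rpow_natCast]
    apply Real.rpow_le_rpow_of_exponent_le (one_le_pow₀ hq1.le)
    push_cast
    linarith
  rw [hcard]
  refine hmain.trans ?_
  rw [← mul_assoc]
  exact mul_le_mul_of_nonneg_left hle (by positivity)
end
end

section
/- Assume char(F_q(t)) > 3 and let F(x) = Σ_{i=1}^4 F_i x_i^3 be a non-singular diagonal cubic form in 4 variables over F_q[t] with dual form F*. Call c an ordinary solution of F*(c)=0 if it is not special, where c is special if all c_i ≠ 0 and there is a partition {i,j,k,l}={1,2,3,4} with (F_i^{-1}c_i^3)^{1/2}+(F_j^{-1}c_j^3)^{1/2} = (F_k^{-1}c_k^3)^{1/2}+(F_l^{-1}c_l^3)^{1/2} = 0 for suitable square roots. Then the number of ordinary solutions c ∈ F_q[t]^4 with F*(c)=0 and |c| ≤ Ĉ is O_ε(Ĉ^{1+ε}). -/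
open scoped Classical
open MeasureTheory

noncomputable section

variable (Fq : Type) [Field Fq] [Fintype Fq]

/-- `c` is a zero of the dual form of the diagonal cubic `Σ Fᵢ xᵢ³`: for a
suitable choice of square roots `sᵢ` of `Fᵢ⁻¹ cᵢ³` one has `Σ sᵢ = 0`. -/
def DualZero (F c : Fin 4 → Polynomial Fq) : Prop :=
  ∃ s : Fin 4 → AlgebraicClosure (RatFunc Fq),
    (∀ i, s i ^ 2 = (amap Fq (F i))⁻¹ * amap Fq (c i) ^ 3) ∧ ∑ i, s i = 0

/-- `c` is a special solution: all `cᵢ ≠ 0` and there is a partition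
`{i,j,k,l} = {1,2,3,4}` with `(Fᵢ⁻¹cᵢ³)^{1/2} + (Fⱼ⁻¹cⱼ³)^{1/2} = 0` and
`(F_k⁻¹c_k³)^{1/2} + (F_l⁻¹c_l³)^{1/2} = 0` for suitable square roots. -/
def SpecialSolution (F c : Fin 4 → Polynomial Fq) : Prop :=
  (∀ i, c i ≠ 0) ∧
  ∃ σ : Equiv.Perm (Fin 4), ∃ s : Fin 4 → AlgebraicClosure (RatFunc Fq),
    (∀ i, s i ^ 2 = (amap Fq (F (σ i)))⁻¹ * amap Fq (c (σ i)) ^ 3) ∧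
    s 0 + s 1 = 0 ∧ s 2 + s 3 = 0

section Combinatorics

lemma comb_fiber {γ δ G : Type*} (T : Finset G) (U : Finset γ) (V : Finset δ)
    (u : γ → G) (v : δ → G) (hU : ∀ x ∈ U, u x ∈ T) :
    ((U ×ˢ V).filter (fun p => u p.1 = v p.2)).card =
      ∑ n ∈ T, (U.filter (fun x => u x = n)).card * (V.filter (fun x => v x = n)).card := by
  rw [Finset.card_eq_sum_card_fiberwise (f := fun p => u p.1) (t := T)]
  · refine Finset.sum_congr rfl fun n _ => ?_
    rw [← Finset.card_product]
    congr 1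
    ext ⟨x, y⟩
    simp only [Finset.mem_filter, Finset.mem_product]
    constructor
    · rintro ⟨⟨⟨h1, h2⟩, h3⟩, h4⟩
      exact ⟨⟨h1, h4⟩, h2, h3 ▸ h4⟩
    · rintro ⟨⟨h1, h2⟩, h3, h4⟩
      exact ⟨⟨⟨h1, h3⟩, h2.trans h4.symm⟩, h2⟩
  · intro p hp
    simp only [Finset.coe_filter, Finset.mem_product, Set.mem_ofPred_eq] at hp
    exact hU _ hp.1.1

lemma comb_cross {α β G : Type*} (A : Finset α) (B : Finset β) (g : α → G) (h : β → G) :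
    2 * ((A ×ˢ B).filter (fun p => g p.1 = h p.2)).card ≤
      ((A ×ˢ A).filter (fun p => g p.1 = g p.2)).card +
      ((B ×ˢ B).filter (fun p => h p.1 = h p.2)).card := by
  have hA : ∀ x ∈ A, g x ∈ A.image g ∪ B.image h := fun x hx =>
    Finset.mem_union_left _ (Finset.mem_image_of_mem _ hx)
  have hB : ∀ x ∈ B, h x ∈ A.image g ∪ B.image h := fun x hx =>
    Finset.mem_union_right _ (Finset.mem_image_of_mem _ hx)
  rw [comb_fiber _ A A g g hA, comb_fiber _ B B h h hB, comb_fiber _ A B g h hA,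
    Finset.mul_sum, ← Finset.sum_add_distrib]
  refine Finset.sum_le_sum fun n _ => ?_
  have := two_mul_le_add_sq ((A.filter (fun x => g x = n)).card) ((B.filter (fun x => h x = n)).card)
  nlinarith

lemma comb_energy {α G : Type*} [AddCommGroup G] (P : Finset α) (f g : α → G) (Z W : ℕ)
    (hZf : ((P ×ˢ P).filter (fun p => f p.1 = f p.2)).card ≤ Z)
    (hZg : ((P ×ˢ P).filter (fun p => g p.1 = g p.2)).card ≤ Z)
    (hW : ∀ n ≠ 0, ((P ×ˢ P).filter (fun p => f p.1 - f p.2 = n)).card ≤ W) :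
    (((P ×ˢ P) ×ˢ (P ×ˢ P)).filter
      (fun p => f p.1.1 + g p.1.2 = f p.2.1 + g p.2.2)).card ≤ P.card ^ 2 * W + Z ^ 2 := by
  rw [Finset.card_eq_sum_card_fiberwise (f := fun p => (p.1.2, p.2.2)) (t := P ×ˢ P)]
  swap
  · intro p hp
    simp only [Finset.coe_filter, Finset.mem_product, Set.mem_ofPred_eq] at hp
    simp [hp.1.1.2, hp.1.2.2]
  have h1 : ∀ y ∈ P ×ˢ P, ((((P ×ˢ P) ×ˢ (P ×ˢ P)).filter
      (fun p => f p.1.1 + g p.1.2 = f p.2.1 + g p.2.2)).filter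
        (fun p => (p.1.2, p.2.2) = y)).card ≤ W + (if g y.1 = g y.2 then Z else 0) := by
    rintro ⟨y, y'⟩ -
    have : ((((P ×ˢ P) ×ˢ (P ×ˢ P)).filter
      (fun p => f p.1.1 + g p.1.2 = f p.2.1 + g p.2.2)).filter
        (fun p => (p.1.2, p.2.2) = (y, y'))).card ≤
        ((P ×ˢ P).filter (fun p => f p.1 - f p.2 = g y' - g y)).card := by
      refine Finset.card_le_card_of_injOn (fun p => (p.1.1, p.2.1)) ?_ ?_
      · rintro ⟨⟨a, b⟩, ⟨c, d⟩⟩ hp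
        simp only [Finset.coe_filter, Finset.mem_filter, Finset.mem_product, Set.mem_ofPred_eq,
          Prod.mk.injEq] at hp ⊢
        obtain ⟨⟨⟨⟨h1, h2⟩, h3, h4⟩, h5⟩, rfl, rfl⟩ := hp
        refine ⟨⟨h1, h3⟩, ?_⟩
        rw [sub_eq_sub_iff_add_eq_add, h5, add_comm]
      · rintro ⟨⟨a, b⟩, ⟨c, d⟩⟩ hp ⟨⟨a', b'⟩, ⟨c', d'⟩⟩ hp' hh
        simp only [Finset.coe_filter, Finset.mem_filter, Set.mem_ofPred_eq,
          Prod.mk.injEq] at hp hp' hh ⊢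
        obtain ⟨-, rfl, rfl⟩ := hp
        obtain ⟨-, rfl, rfl⟩ := hp'
        obtain ⟨rfl, rfl⟩ := hh
        simp
    refine this.trans ?_
    simp only
    split_ifs with h
    · rw [h, sub_self]
      simp only [sub_eq_zero]
      omega
    · have := hW (g y' - g y) (sub_ne_zero.2 (Ne.symm h))
      omega
  refine (Finset.sum_le_sum h1).trans ?_
  rw [Finset.sum_add_distrib, Finset.sum_const, Finset.card_product, ← Finset.sum_filter,
    Finset.sum_const, smul_eq_mul, smul_eq_mul]
  have := Nat.mul_le_mul_right Z hZg
  nlinarith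

lemma comb_four {α G : Type*} [AddCommGroup G] (P : Finset α) (f : Fin 4 → α → G) (Z W : ℕ)
    (hZ : ∀ i, ((P ×ˢ P).filter (fun p => f i p.1 = f i p.2)).card ≤ Z)
    (hW : ∀ i, ∀ n ≠ 0, ((P ×ˢ P).filter (fun p => f i p.1 - f i p.2 = n)).card ≤ W) :
    ((Fintype.piFinset (fun _ : Fin 4 => P)).filter (fun e => ∑ i, f i (e i) = 0)).card
      ≤ P.card ^ 2 * W + Z ^ 2 := by
  have h1 := comb_energy P (f 0) (f 1) Z W (hZ 0) (hZ 1) (hW 0)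
  have h2 := comb_energy P (f 2) (f 3) Z W (hZ 2) (hZ 3) (hW 2)
  have h3 := comb_cross (P ×ˢ P) (P ×ˢ P) (fun p => f 0 p.1 + f 1 p.2)
    (fun p => -(f 2 p.1 + f 3 p.2))
  simp only [neg_inj] at h3
  have h4 : ((Fintype.piFinset (fun _ : Fin 4 => P)).filter (fun e => ∑ i, f i (e i) = 0)).card
      ≤ (((P ×ˢ P) ×ˢ (P ×ˢ P)).filter
      (fun p => f 0 p.1.1 + f 1 p.1.2 = -(f 2 p.2.1 + f 3 p.2.2))).card := by
    refine Finset.card_le_card_of_injOn (fun e => ((e 0, e 1), (e 2, e 3))) ?_ ?_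
    · intro e he
      simp only [Finset.coe_filter, Finset.mem_product, Set.mem_ofPred_eq,
        Fintype.mem_piFinset] at he ⊢
      refine ⟨⟨⟨he.1 _, he.1 _⟩, he.1 _, he.1 _⟩, ?_⟩
      rw [eq_neg_iff_add_eq_zero, ← he.2, Fin.sum_univ_four]
      abel
    · intro e _ e' _ h
      simp only [Prod.mk.injEq] at h
      ext i
      fin_cases i <;> simp [h]
  omega

end Combinatorics

section DivisorBound

open Polynomial

variable {k : Type} [Field k] [Fintype k]

/-- Polynomials of degree at most `m`. -/
def polLE (k : Type) [Field k] [Fintype k] (m : ℕ) : Finset k[X] :=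
  (Finset.univ : Finset (Fin (m + 1) → k)).image (fun f => ∑ i : Fin (m + 1), C (f i) * X ^ (i : ℕ))

lemma mem_polLE {m : ℕ} {p : k[X]} : p ∈ polLE k m ↔ p.natDegree ≤ m := by
  unfold polLE
  simp only [Finset.mem_image, Finset.mem_univ, true_and]
  constructor
  · rintro ⟨f, rfl⟩
    refine natDegree_sum_le_of_forall_le _ _ fun i _ => ?_
    exact (natDegree_C_mul_X_pow_le _ _).trans (by omega)
  · intro h
    refine ⟨fun i => p.coeff i, ?_⟩
    rw [Fin.sum_univ_eq_sum_range (fun i => C (p.coeff i) * X ^ i) (m + 1)]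
    exact (p.as_sum_range_C_mul_X_pow' (by omega)).symm

lemma card_polLE (m : ℕ) : (polLE k m).card ≤ Fintype.card k ^ (m + 1) := by
  unfold polLE
  refine Finset.card_image_le.trans ?_
  simp

/-- Monic divisors. -/
def monDiv (n : k[X]) : Finset k[X] :=
  (polLE k n.natDegree).filter (fun u => u.Monic ∧ u ∣ n)

lemma mem_monDiv {n u : k[X]} (hn : n ≠ 0) : u ∈ monDiv n ↔ u.Monic ∧ u ∣ n := by
  unfold monDiv
  rw [Finset.mem_filter, mem_polLE]
  exact ⟨fun h => h.2, fun h => ⟨natDegree_le_of_dvd h.2 hn, h⟩⟩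

lemma card_monDiv_mul {x y : k[X]} (hx : x ≠ 0) (hy : y ≠ 0) :
    (monDiv (x * y)).card ≤ (monDiv x).card * (monDiv y).card := by
  rw [← Finset.card_product]
  refine (Finset.card_le_card (t := (monDiv x ×ˢ monDiv y).image (fun p => p.1 * p.2)) ?_).trans
    Finset.card_image_le
  intro u hu
  rw [mem_monDiv (mul_ne_zero hx hy)] at hu
  obtain ⟨hm, hd⟩ := hu
  obtain ⟨a, b, ha, hb, rfl⟩ := exists_dvd_and_dvd_of_dvd_mul hd
  have hab := hm.ne_zero
  have ha0 : a ≠ 0 := left_ne_zero_of_mul hab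
  have hb0 : b ≠ 0 := right_ne_zero_of_mul hab
  rw [Finset.mem_image]
  refine ⟨(normalize a, normalize b), ?_, ?_⟩
  · rw [Finset.mem_product, mem_monDiv hx, mem_monDiv hy]
    exact ⟨⟨monic_normalize ha0, normalize_dvd_iff.2 ha⟩, monic_normalize hb0,
      normalize_dvd_iff.2 hb⟩
  · simp only
    rw [← normalize_mul, hm.normalize_eq_self]

lemma card_monDiv_pow {p : k[X]} (hp : Prime p) (i : ℕ) :
    (monDiv (p ^ i)).card ≤ i + 1 := by
  refine (Finset.card_le_card (t := (Finset.range (i + 1)).image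
    (fun j => normalize (p ^ j))) ?_).trans (Finset.card_image_le.trans (by simp))
  intro u hu
  rw [mem_monDiv (pow_ne_zero _ hp.ne_zero)] at hu
  obtain ⟨hm, hd⟩ := hu
  obtain ⟨j, hj, ha⟩ := (dvd_prime_pow hp i).1 hd
  rw [Finset.mem_image]
  refine ⟨j, by simp; omega, ?_⟩
  rw [← hm.normalize_eq_self]
  exact (normalize_eq_normalize_iff_associated.2 ha).symm

lemma divisor_bound (k : Type) [Field k] [Fintype k] (θ : ℝ) (hθ : 1 < θ) :
    ∃ K : ℝ, 1 ≤ K ∧ ∀ n : k[X], n ≠ 0 → ((monDiv n).card : ℝ) ≤ K * θ ^ n.natDegree := by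
  obtain ⟨L, hL⟩ := pow_unbounded_of_one_lt 2 hθ
  set A : ℝ := max 1 (1 / (θ - 1)) with hA
  have hA1 : 1 ≤ A := le_max_left _ _
  have hA2 : 1 ≤ A * (θ - 1) := by
    have : 1 / (θ - 1) ≤ A := le_max_right _ _
    rwa [div_le_iff₀ (by linarith)] at this
  have hAi : ∀ i : ℕ, (i : ℝ) + 1 ≤ A * θ ^ i := by
    intro i
    have h1 := one_add_mul_le_pow (a := θ - 1) (by linarith) i
    have h2 : θ ^ i ≥ 1 + i * (θ - 1) := by simpa using h1
    have h3 : A * (1 + i * (θ - 1)) ≤ A * θ ^ i := by gcongr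
    have hi : (0 : ℝ) ≤ i := by positivity
    nlinarith
  set S : Finset k[X] := (polLE k L).filter (fun p => Prime p ∧ p.Monic) with hS
  have key : ∀ n : k[X], n ≠ 0 →
      ((monDiv n).card : ℝ) ≤ A ^ (S.filter (fun p => p ∣ n)).card * θ ^ n.natDegree := by
    intro n
    induction n using UniqueFactorizationMonoid.induction_on_coprime with
    | h0 => intro h; exact absurd rfl h
    | @h1 x hx =>
      intro h0
      have hc := card_monDiv_pow (k := k) (p := X) prime_X 0
      have : monDiv x ⊆ monDiv (X ^ 0) := by
        intro u hu
        rw [mem_monDiv h0] at hu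
        rw [mem_monDiv (by simp)]
        exact ⟨hu.1, (isUnit_of_dvd_unit hu.2 hx).dvd⟩
      have h2 : (monDiv x).card ≤ 1 := (Finset.card_le_card this).trans hc
      have h3 : ((monDiv x).card : ℝ) ≤ 1 := by exact_mod_cast h2
      have h4 : 1 ≤ A ^ (S.filter (fun p => p ∣ x)).card := one_le_pow₀ hA1
      have h5 : 1 ≤ θ ^ x.natDegree := one_le_pow₀ hθ.le
      nlinarith
    | @hpr p i hp =>
      intro h0
      have hc : ((monDiv (p ^ i)).card : ℝ) ≤ i + 1 := by exact_mod_cast card_monDiv_pow hp i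
      refine hc.trans ?_
      have hdeg : 1 ≤ p.natDegree :=
        Nat.one_le_iff_ne_zero.2 (hp.irreducible.natDegree_pos).ne'
      rw [natDegree_pow]
      by_cases hsm : p.natDegree ≤ L
      · rcases Nat.eq_zero_or_pos i with rfl | hi
        · simp only [Nat.cast_zero, zero_add, zero_mul, pow_zero, mul_one]
          exact one_le_pow₀ hA1
        have hmem : normalize p ∈ S.filter (fun r => r ∣ p ^ i) := by
          rw [Finset.mem_filter, hS, Finset.mem_filter, mem_polLE]
          refine ⟨⟨?_, ?_, monic_normalize hp.ne_zero⟩, ?_⟩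
          · rwa [natDegree_eq_of_degree_eq (degree_normalize)]
          · exact (normalize_associated p).symm.prime hp
          · exact normalize_dvd_iff.2 (dvd_pow_self _ hi.ne')
        have h1 : A ≤ A ^ (S.filter (fun r => r ∣ p ^ i)).card :=
          le_self_pow₀ hA1 (Finset.card_pos.2 ⟨_, hmem⟩).ne'
        have h2 : θ ^ i ≤ θ ^ (i * p.natDegree) :=
          pow_le_pow_right₀ hθ.le (Nat.le_mul_of_pos_right _ hdeg)
        calc (i : ℝ) + 1 ≤ A * θ ^ i := hAi i
          _ ≤ _ := by gcongr
      · have h1 : (1 : ℝ) ≤ A ^ (S.filter (fun r => r ∣ p ^ i)).card := one_le_pow₀ hA1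
        have h2 : (2 : ℝ) ≤ θ ^ p.natDegree :=
          hL.le.trans (pow_le_pow_right₀ hθ.le (by omega))
        have h3 : (2 : ℝ) ^ i ≤ θ ^ (i * p.natDegree) := by
          rw [mul_comm, pow_mul]; gcongr
        have h4 : (i : ℝ) + 1 ≤ 2 ^ i := by
          exact_mod_cast (Nat.lt_two_pow_self : i < 2 ^ i)
        have h5 : (0 : ℝ) ≤ θ ^ (i * p.natDegree) := by positivity
        nlinarith
    | @hcp x y hxy ihx ihy =>
      intro h0
      have hx0 := left_ne_zero_of_mul h0
      have hy0 := right_ne_zero_of_mul h0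
      have h1 : ((monDiv (x * y)).card : ℝ) ≤ (monDiv x).card * (monDiv y).card := by
        exact_mod_cast card_monDiv_mul hx0 hy0
      refine h1.trans ?_
      rw [natDegree_mul hx0 hy0]
      have hcard : (S.filter (fun p => p ∣ x)).card + (S.filter (fun p => p ∣ y)).card ≤
          (S.filter (fun p => p ∣ x * y)).card := by
        rw [← Finset.card_union_of_disjoint]
        · apply Finset.card_le_card
          intro r hr
          simp only [Finset.mem_union, Finset.mem_filter] at hr ⊢
          rcases hr with h | h
          · exact ⟨h.1, h.2.mul_right _⟩
          · exact ⟨h.1, h.2.mul_left _⟩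
        · rw [Finset.disjoint_left]
          intro r hr hr'
          rw [Finset.mem_filter] at hr hr'
          have : Prime r := by
            have := hr.1
            rw [hS, Finset.mem_filter] at this
            exact this.2.1
          exact this.not_isUnit (hxy hr.2 hr'.2)
      calc ((monDiv x).card : ℝ) * (monDiv y).card
          ≤ (A ^ (S.filter (fun p => p ∣ x)).card * θ ^ x.natDegree) *
            (A ^ (S.filter (fun p => p ∣ y)).card * θ ^ y.natDegree) := by
              gcongr
              · exact ihx hx0
              · exact ihy hy0
        _ = A ^ ((S.filter (fun p => p ∣ x)).card + (S.filter (fun p => p ∣ y)).card)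
            * θ ^ (x.natDegree + y.natDegree) := by rw [pow_add, pow_add]; ring
        _ ≤ _ := by gcongr
  refine ⟨A ^ S.card, one_le_pow₀ hA1, fun n hn => (key n hn).trans ?_⟩
  gcongr
  exact Finset.filter_subset _ _

lemma card_allDiv (n : k[X]) (hn : n ≠ 0) (T : Finset k[X]) (hT : ∀ u ∈ T, u ∣ n) :
    T.card ≤ Fintype.card k * (monDiv n).card := by
  have : T.card ≤ ((Finset.univ : Finset k) ×ˢ monDiv n).card := by
    refine Finset.card_le_card_of_injOn (fun u => (u.leadingCoeff, normalize u)) ?_ ?_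
    · intro u hu
      have hu' := hT u hu
      simp only [Finset.coe_product, Finset.coe_univ, Set.mem_prod, Set.mem_univ, true_and,
        Finset.mem_coe]
      rw [mem_monDiv hn]
      exact ⟨monic_normalize (ne_zero_of_dvd_ne_zero hn hu'), normalize_dvd_iff.2 hu'⟩
    · intro u hu v hv h
      simp only [Prod.mk.injEq] at h
      have hu0 := ne_zero_of_dvd_ne_zero hn (hT u hu)
      have hv0 := ne_zero_of_dvd_ne_zero hn (hT v hv)
      obtain ⟨h1, h2⟩ := h
      obtain ⟨w, hw⟩ := normalize_eq_normalize_iff_associated.1 h2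
      obtain ⟨c, hc, hcw⟩ := isUnit_iff.1 w.isUnit
      rw [← hcw] at hw
      have h3 := congrArg leadingCoeff hw
      rw [leadingCoeff_mul, leadingCoeff_C, h1] at h3
      have : c = 1 := by
        have := leadingCoeff_ne_zero.2 hv0
        exact mul_left_cancel₀ this (by rw [h3, mul_one])
      rw [this] at hw
      simpa using hw
  simpa [Finset.card_product] using this

lemma cube_diff_count (h3 : (3 : k) ≠ 0) (a n : k[X]) (hn : n ≠ 0) (P : Finset k[X]) :
    ((P ×ˢ P).filter (fun p => a * p.1 ^ 3 - a * p.2 ^ 3 = n)).card ≤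
      2 * (Fintype.card k * (monDiv n).card) := by
  set S := (P ×ˢ P).filter (fun p => a * p.1 ^ 3 - a * p.2 ^ 3 = n) with hS
  have h1 : (S.image (fun p => p.1 - p.2)).card ≤ Fintype.card k * (monDiv n).card := by
    refine card_allDiv n hn _ ?_
    intro u hu
    obtain ⟨⟨x, y⟩, hxy, rfl⟩ := Finset.mem_image.1 hu
    rw [hS, Finset.mem_filter] at hxy
    exact ⟨a * (x ^ 2 + x * y + y ^ 2), by rw [← hxy.2]; ring⟩
  refine (Finset.card_le_mul_card_image (f := fun p => p.1 - p.2) S 2 ?_).trans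
    (Nat.mul_le_mul_left _ h1)
  intro u hu
  obtain ⟨⟨x, y⟩, hxy, hxu⟩ := Finset.mem_image.1 hu
  have hsub : S.filter (fun p => p.1 - p.2 = u) ⊆ {(x, y), (-y, -x)} := by
    rintro ⟨x', y'⟩ hp
    rw [Finset.mem_filter] at hp
    obtain ⟨hp, hpu⟩ := hp
    rw [hS, Finset.mem_filter] at hp hxy
    simp only at hp hxy hpu hxu
    have e1 := hxy.2
    have e2 := hp.2
    have f1 : n = a * u * (u ^ 2 + 3 * (x * y)) := by rw [← e1, ← hxu]; ring
    have f2 : n = a * u * (u ^ 2 + 3 * (x' * y')) := by rw [← e2, ← hpu]; ring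
    have hau : a * u ≠ 0 := by
      intro h; rw [h, zero_mul] at f1; exact hn f1
    have h3' : (3 : k[X]) ≠ 0 := by
      have : (C (3 : k)) ≠ 0 := C_ne_zero.2 h3
      rwa [show (C (3 : k)) = 3 from map_ofNat C 3] at this
    have f3 := mul_left_cancel₀ hau (f1.symm.trans f2)
    have f4 : x * y = x' * y' := mul_left_cancel₀ h3' (add_left_cancel f3)
    have hy : y = x - u := by rw [← hxu]; ring
    have hy' : y' = x' - u := by rw [← hpu]; ring
    have f5 : (x' - x) * (x' + y) = 0 := by
      rw [hy'] at f4
      rw [hy] at f4 ⊢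
      linear_combination -f4
    simp only [Finset.mem_insert, Finset.mem_singleton, Prod.mk.injEq]
    rcases mul_eq_zero.1 f5 with h | h
    · left
      have : x' = x := sub_eq_zero.1 h
      exact ⟨this, by rw [hy', hy, this]⟩
    · right
      have : x' = -y := eq_neg_of_add_eq_zero_left h
      exact ⟨this, by rw [hy', this, hy]; ring⟩
  exact (Finset.card_le_card hsub).trans Finset.card_le_two

lemma cube_eq_count (a : k[X]) (ha : a ≠ 0) (P : Finset k[X]) :
    ((P ×ˢ P).filter (fun p => a * p.1 ^ 3 = a * p.2 ^ 3)).card ≤ 3 * P.card := by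
  set S := (P ×ˢ P).filter (fun p => a * p.1 ^ 3 = a * p.2 ^ 3) with hS
  refine Finset.card_le_mul_card_image_of_maps_to (f := fun p => p.2) (t := P) ?_ 3 ?_
  · intro p hp
    rw [hS, Finset.mem_filter, Finset.mem_product] at hp
    exact hp.1.2
  · intro y _
    refine le_trans (b := (nthRoots 3 (y ^ 3)).toFinset.card) ?_
      ((Multiset.toFinset_card_le _).trans (card_nthRoots _ _))
    refine Finset.card_le_card_of_injOn (fun p => p.1) ?_ ?_
    · rintro ⟨x, y'⟩ hp
      rw [Finset.mem_coe, Finset.mem_filter, hS, Finset.mem_filter] at hp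
      obtain ⟨⟨-, h⟩, rfl⟩ := hp
      rw [Finset.mem_coe, Multiset.mem_toFinset, mem_nthRoots (by norm_num)]
      exact mul_left_cancel₀ ha h
    · rintro ⟨x, y'⟩ hp ⟨x2, y2⟩ hp2 h
      rw [Finset.mem_coe, Finset.mem_filter] at hp hp2
      simp only at h
      rw [Prod.mk.injEq]
      exact ⟨h, hp.2.trans hp2.2.symm⟩

end DivisorBound

section FourCubes

open Polynomial

variable {k : Type} [Field k] [Fintype k]

set_option maxHeartbeats 1000000 in
lemma four_count (h3 : (3 : k) ≠ 0) (a : Fin 4 → k[X]) (ha : ∀ i, a i ≠ 0)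
    (θ : ℝ) (hθ : 1 < θ) :
    ∃ K : ℝ, 0 < K ∧ ∀ m : ℕ,
      (((Fintype.piFinset (fun _ : Fin 4 => polLE k m)).filter
        (fun e => ∑ i, a i * e i ^ 3 = 0)).card : ℝ) ≤
        K * (Fintype.card k : ℝ) ^ (2 * m) * θ ^ (3 * m) := by
  obtain ⟨K, hK, hdiv⟩ := divisor_bound k θ hθ
  set q : ℝ := (Fintype.card k : ℝ) with hq
  have hq0 : 0 < q := by rw [hq]; exact_mod_cast Fintype.card_pos
  set f : ℕ := ∑ i, (a i).natDegree with hf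
  refine ⟨q ^ 2 * (2 * (q * (K * θ ^ f))) + 9 * q ^ 2, by positivity, fun m => ?_⟩
  set Wr : ℝ := 2 * (q * (K * θ ^ (3 * m + f))) with hWr
  have hWr0 : 0 ≤ Wr := by positivity
  set P := polLE k m with hP
  have hPc : (P.card : ℝ) ≤ q ^ (m + 1) := by
    rw [hq]; exact_mod_cast card_polLE m
  have hA : ∀ i, ((P ×ˢ P).filter (fun p => a i * p.1 ^ 3 = a i * p.2 ^ 3)).card ≤ 3 * P.card :=
    fun i => cube_eq_count (a i) (ha i) P
  have hB : ∀ i, ∀ n ≠ 0,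
      ((P ×ˢ P).filter (fun p => a i * p.1 ^ 3 - a i * p.2 ^ 3 = n)).card ≤ ⌊Wr⌋₊ := by
      intro i n hn
      apply Nat.le_floor
      rcases Finset.eq_empty_or_nonempty
        ((P ×ˢ P).filter (fun p => a i * p.1 ^ 3 - a i * p.2 ^ 3 = n)) with he | ⟨⟨x, y⟩, hxy⟩
      · simp only [he, Finset.card_empty, Nat.cast_zero]; exact hWr0
      have hdeg : n.natDegree ≤ 3 * m + f := by
        rw [Finset.mem_filter, Finset.mem_product, hP, mem_polLE, mem_polLE] at hxy
        obtain ⟨⟨hx, hy⟩, rfl⟩ := hxy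
        simp only at hx hy
        have hai : (a i).natDegree ≤ f :=
          Finset.single_le_sum (f := fun i => (a i).natDegree) (fun _ _ => Nat.zero_le _)
            (Finset.mem_univ i)
        have hb : ∀ z : k[X], z.natDegree ≤ m → (a i * z ^ 3).natDegree ≤ 3 * m + f := by
          intro z hz
          refine natDegree_mul_le.trans ?_
          have := natDegree_pow_le (p := z) (n := 3)
          omega
        exact (natDegree_sub_le _ _).trans (max_le (hb x hx) (hb y hy))
      have h1 := cube_diff_count h3 (a i) n hn P
      have h2 := hdiv n hn
      have h4 : θ ^ n.natDegree ≤ θ ^ (3 * m + f) := pow_le_pow_right₀ hθ.le hdeg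
      calc (((P ×ˢ P).filter (fun p => a i * p.1 ^ 3 - a i * p.2 ^ 3 = n)).card : ℝ)
          ≤ 2 * (q * (monDiv n).card) := by rw [hq]; exact_mod_cast h1
        _ ≤ 2 * (q * (K * θ ^ n.natDegree)) := by gcongr
        _ ≤ Wr := by rw [hWr]; gcongr
  have hcomb : ((Fintype.piFinset (fun _ : Fin 4 => P)).filter
        (fun e => ∑ i, a i * e i ^ 3 = 0)).card ≤ P.card ^ 2 * ⌊Wr⌋₊ + (3 * P.card) ^ 2 := by
    have := comb_four P (fun i x => a i * x ^ 3) (3 * P.card) ⌊Wr⌋₊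
      (fun i => by convert hA i) (fun i n hn => by convert hB i n hn)
    convert this
  have hfl : ((⌊Wr⌋₊ : ℕ) : ℝ) ≤ Wr := Nat.floor_le hWr0
  have h1 : (((Fintype.piFinset (fun _ : Fin 4 => P)).filter
        (fun e => ∑ i, a i * e i ^ 3 = 0)).card : ℝ) ≤
        (P.card : ℝ) ^ 2 * (⌊Wr⌋₊ : ℕ) + (3 * P.card) ^ 2 := by exact_mod_cast hcomb
  have hθ3 : 1 ≤ θ ^ (3 * m) := one_le_pow₀ hθ.le
  calc _ ≤ (P.card : ℝ) ^ 2 * (⌊Wr⌋₊ : ℕ) + (3 * P.card) ^ 2 := h1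
    _ ≤ (q ^ (m + 1)) ^ 2 * Wr + (3 * q ^ (m + 1)) ^ 2 * 1 := by rw [mul_one]; gcongr
    _ ≤ (q ^ (m + 1)) ^ 2 * Wr + (3 * q ^ (m + 1)) ^ 2 * θ ^ (3 * m) := by gcongr
    _ = _ := by rw [hWr, pow_add θ, pow_succ, pow_mul']; ring

end FourCubes

section Algebra

open Polynomial

lemma pair_lemma {L : Type*} [Field L] (R : Subfield L) (h2 : (2 : L) ≠ 0) (s1 s2 s3 s4 : L)
    (h1 : s1 ^ 2 ∈ R) (h2' : s2 ^ 2 ∈ R) (h3 : s3 ^ 2 ∈ R) (h4 : s4 ^ 2 ∈ R)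
    (hs : s1 + s2 + s3 + s4 = 0) :
    s1 * s2 ∈ R ∨ (s1 * s2 ≠ 0 ∧ s3 * s4 ≠ 0 ∧
      ((s1 + s3 = 0 ∧ s2 + s4 = 0) ∨ (s1 + s4 = 0 ∧ s2 + s3 = 0))) := by
  by_cases hR : s1 * s2 ∈ R
  · exact Or.inl hR
  right
  have hne : s1 * s2 ≠ 0 := fun h => hR (h ▸ R.zero_mem)
  set κ := s3 ^ 2 + s4 ^ 2 - s1 ^ 2 - s2 ^ 2 with hκ
  have hκR : κ ∈ R := R.sub_mem (R.sub_mem (R.add_mem h3 h4) h1) h2'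
  have e0 : s4 = -(s1 + s2 + s3) := by linear_combination hs
  have e1 : 2 * (s1 * s2) = 2 * (s3 * s4) + κ := by
    rw [hκ, e0]; ring
  have hκ0 : κ = 0 := by
    by_contra hk
    apply hR
    have h4' : (4 : L) ≠ 0 := by
      have : (4 : L) = 2 * 2 := by norm_num
      rw [this]; exact mul_ne_zero h2 h2
    have e2 : s1 * s2 = (4 * (s1 ^ 2 * s2 ^ 2) + κ ^ 2 - 4 * (s3 ^ 2 * s4 ^ 2)) / (4 * κ) := by
      rw [eq_div_iff (mul_ne_zero h4' hk)]
      have e3 : 2 * (s3 * s4) = 2 * (s1 * s2) - κ := by linear_combination -e1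
      have e4 : 4 * (s3 ^ 2 * s4 ^ 2) = (2 * (s1 * s2) - κ) ^ 2 := by rw [← e3]; ring
      rw [e4]; ring
    rw [e2]
    have h4R : (4 : L) ∈ R := by
      have := natCast_mem R 4
      simpa using this
    exact R.div_mem (R.sub_mem (R.add_mem (R.mul_mem h4R (R.mul_mem h1 h2')) (R.pow_mem hκR 2))
      (R.mul_mem h4R (R.mul_mem h3 h4))) (R.mul_mem h4R hκR)
  have e5 : s1 * s2 = s3 * s4 := by
    apply mul_left_cancel₀ h2; rw [e1, hκ0, add_zero]
  refine ⟨hne, e5 ▸ hne, ?_⟩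
  have e6 : (s1 + s3) * (s1 + s4) = 0 := by
    linear_combination s1 * hs - e5
  rcases mul_eq_zero.1 e6 with h | h
  · left; exact ⟨h, by linear_combination hs - h⟩
  · right; exact ⟨h, by linear_combination hs - h⟩

lemma squarefree_decomp {k : Type} [Field k] : ∀ (N : ℕ) (n : k[X]), n.natDegree ≤ N → n ≠ 0 →
    ∃ d e : k[X], Squarefree d ∧ n = d * e ^ 2 := by
  intro N
  induction N with
  | zero =>
    intro n hN hn
    refine ⟨n, 1, ?_, by simp⟩
    apply IsUnit.squarefree
    rw [isUnit_iff_degree_eq_zero, degree_eq_natDegree hn]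
    simpa using hN
  | succ N ih =>
    intro n hN hn
    by_cases hsq : Squarefree n
    · exact ⟨n, 1, hsq, by simp⟩
    unfold Squarefree at hsq
    push Not at hsq
    obtain ⟨x, ⟨m, rfl⟩, hx⟩ := hsq
    have hm0 := right_ne_zero_of_mul hn
    have hx0 := left_ne_zero_of_mul (left_ne_zero_of_mul hn)
    have hxd : 0 < x.natDegree := natDegree_pos_iff_degree_pos.2 (degree_pos_of_ne_zero_of_nonunit hx0 hx)
    rw [natDegree_mul (mul_ne_zero hx0 hx0) hm0, natDegree_mul hx0 hx0] at hN
    obtain ⟨d, e, hd, rfl⟩ := ih m (by omega) hm0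
    exact ⟨d, x * e, hd, by ring⟩

lemma perm_exists : ∀ i j : Fin 4, i ≠ j → ∃ σ : Equiv.Perm (Fin 4), σ 0 = i ∧ σ 1 = j := by
  intro i j h
  refine ⟨Equiv.swap (Equiv.swap 0 i 1) j * Equiv.swap 0 i, ?_, ?_⟩
  · simp only [Equiv.Perm.mul_apply, Equiv.swap_apply_left]
    apply Equiv.swap_apply_of_ne_of_ne _ h
    intro hh
    have := (Equiv.swap (0 : Fin 4) i).injective ((Equiv.swap_apply_left 0 i).trans hh)
    exact absurd this (by decide)
  · simp only [Equiv.Perm.mul_apply, Equiv.swap_apply_left]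

variable {k : Type} [Field k] [Fintype k]

set_option maxHeartbeats 1000000 in
lemma special_or (h2 : (2 : k) ≠ 0) (F c : Fin 4 → k[X]) (hns : ¬ SpecialSolution k F c)
    (s : Fin 4 → AlgebraicClosure (RatFunc k))
    (hs : ∀ i, s i ^ 2 = (amap k (F i))⁻¹ * amap k (c i) ^ 3) (hsum : ∑ i, s i = 0) :
    ∀ i j, s i * s j ∈ (algebraMap (RatFunc k) (AlgebraicClosure (RatFunc k))).fieldRange := by
  set R := (algebraMap (RatFunc k) (AlgebraicClosure (RatFunc k))).fieldRange with hR
  have hmem : ∀ x, amap k x ∈ R := fun x => ⟨_, rfl⟩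
  have hsR : ∀ i, s i ^ 2 ∈ R := by
    intro i
    rw [hs i]
    exact R.mul_mem (R.inv_mem (hmem _)) (R.pow_mem (hmem _) 3)
  have h2L : (2 : AlgebraicClosure (RatFunc k)) ≠ 0 := by
    have := (map_ne_zero_iff (algebraMap k (AlgebraicClosure (RatFunc k)))
      (algebraMap k (AlgebraicClosure (RatFunc k))).injective).2 h2
    rwa [map_ofNat] at this
  intro i j
  by_cases hij : i = j
  · rw [← hij, ← sq]; exact hsR i
  obtain ⟨σ, rfl, rfl⟩ := perm_exists i j hij
  have hsum' : s (σ 0) + s (σ 1) + s (σ 2) + s (σ 3) = 0 := by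
    rw [← hsum, ← Equiv.sum_comp σ s, Fin.sum_univ_four]
  rcases pair_lemma R h2L _ _ _ _ (hsR (σ 0)) (hsR (σ 1)) (hsR (σ 2)) (hsR (σ 3)) hsum' with
    h | ⟨hne, hne', h⟩
  · exact h
  exfalso
  apply hns
  have hz : ∀ i, s (σ i) ≠ 0 := by
    intro i
    fin_cases i
    · exact left_ne_zero_of_mul hne
    · exact right_ne_zero_of_mul hne
    · exact left_ne_zero_of_mul hne'
    · exact right_ne_zero_of_mul hne'
  refine ⟨?_, ?_⟩
  · intro i hi
    obtain ⟨l, rfl⟩ := σ.surjective i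
    apply hz l
    have := hs (σ l)
    rw [hi] at this
    simpa [amap] using this
  have main : ∀ τ : Equiv.Perm (Fin 4), s (τ 0) + s (τ 1) = 0 → s (τ 2) + s (τ 3) = 0 →
      ∃ σ : Equiv.Perm (Fin 4), ∃ s : Fin 4 → AlgebraicClosure (RatFunc k),
        (∀ i, s i ^ 2 = (amap k (F (σ i)))⁻¹ * amap k (c (σ i)) ^ 3) ∧
        s 0 + s 1 = 0 ∧ s 2 + s 3 = 0 :=
    fun τ ha hb => ⟨τ, fun i => s (τ i), fun i => hs (τ i), ha, hb⟩
  rcases h with ⟨ha, hb⟩ | ⟨ha, hb⟩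
  · apply main ((Equiv.swap 1 2).trans σ)
    · rw [Equiv.trans_apply, Equiv.trans_apply, show Equiv.swap (1 : Fin 4) 2 0 = 0 by decide,
        show Equiv.swap (1 : Fin 4) 2 1 = 2 by decide]
      exact ha
    · rw [Equiv.trans_apply, Equiv.trans_apply, show Equiv.swap (1 : Fin 4) 2 2 = 1 by decide,
        show Equiv.swap (1 : Fin 4) 2 3 = 3 by decide]
      exact hb
  · apply main ((Equiv.swap 1 3).trans σ)
    · rw [Equiv.trans_apply, Equiv.trans_apply, show Equiv.swap (1 : Fin 4) 3 0 = 0 by decide,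
        show Equiv.swap (1 : Fin 4) 3 1 = 3 by decide]
      exact ha
    · rw [Equiv.trans_apply, Equiv.trans_apply, show Equiv.swap (1 : Fin 4) 3 2 = 2 by decide,
        show Equiv.swap (1 : Fin 4) 3 3 = 1 by decide, add_comm]
      exact hb

/-- coefficients of the associated diagonal cubic surface -/
def aco (F : Fin 4 → k[X]) (i : Fin 4) : k[X] := ∏ l ∈ Finset.univ.erase i, F l ^ 2

lemma amap_ringHom : ∃ φ : k[X] →+* AlgebraicClosure (RatFunc k),
    Function.Injective φ ∧ ∀ x, amap k x = φ x :=
  ⟨(algebraMap (RatFunc k) (AlgebraicClosure (RatFunc k))).comp (algebraMap k[X] (RatFunc k)),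
    by
      rw [RingHom.coe_comp]
      exact (algebraMap (RatFunc k) (AlgebraicClosure (RatFunc k))).injective.comp
        (IsFractionRing.injective k[X] (RatFunc k)), fun _ => rfl⟩

set_option maxHeartbeats 1000000 in
lemma dual_factor_lemma (h2 : (2 : k) ≠ 0) (F c : Fin 4 → k[X]) (hF : ∀ i, F i ≠ 0)
    (hns : ¬ SpecialSolution k F c) (hdz : DualZero k F c) :
    ∃ (d : k[X]) (e : Fin 4 → k[X]), d ≠ 0 ∧ (∀ i, F i * c i = d * e i ^ 2) ∧
      ∑ i, aco F i * e i ^ 3 = 0 := by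
  by_cases hc : ∀ i, c i = 0
  · exact ⟨1, 0, one_ne_zero, fun i => by simp [hc i], by simp⟩
  push Not at hc
  obtain ⟨i0, hi0⟩ := hc
  obtain ⟨s, hs, hsum⟩ := hdz
  have hR := special_or h2 F c hns s hs hsum
  obtain ⟨φ, hφ, hφa⟩ := amap_ringHom (k := k)
  set R := (algebraMap (RatFunc k) (AlgebraicClosure (RatFunc k))).fieldRange with hRdef
  have hmem : ∀ x, φ x ∈ R := fun x => by rw [← hφa]; exact ⟨_, rfl⟩
  simp only [hφa] at hs
  have hφ0 : ∀ {x}, x ≠ 0 → φ x ≠ 0 := fun hx => (map_ne_zero_iff φ hφ).2 hx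
  obtain ⟨d, e0, hd, hde⟩ := squarefree_decomp _ (F i0 * c i0) le_rfl (mul_ne_zero (hF i0) hi0)
  have hFc := mul_ne_zero (hF i0) hi0
  rw [hde] at hFc
  have hd0 := left_ne_zero_of_mul hFc
  have he0 : e0 ≠ 0 := by
    rintro rfl; simp at hFc
  have hdeφ : φ (F i0) * φ (c i0) = φ d * φ e0 ^ 2 := by
    rw [← map_mul, hde, map_mul, map_pow]
  set δ := s i0 * φ (F i0) / (φ (c i0) * φ e0) with hδ
  have hδ2 : δ ^ 2 = φ d := by
    have n1 := hφ0 (hF i0)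
    have n2 := hφ0 hi0
    have n3 := hφ0 he0
    rw [hδ, div_pow, mul_pow, hs, div_eq_iff (by positivity)]
    field_simp
    linear_combination hdeφ
  have hδ0 : δ ≠ 0 := by
    intro h; rw [h] at hδ2; exact hφ0 hd0 (by rw [← hδ2]; simp)
  have hex : ∀ j, ∃ e : k[X], F j * c j = d * e ^ 2 ∧ s j * φ (F j) = φ (c j) * φ e * δ := by
    intro j
    by_cases hcj : c j = 0
    · refine ⟨0, by simp [hcj], ?_⟩
      have := hs j
      rw [hcj] at this
      have : s j = 0 := by simpa using this
      simp [this]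
    have n1 := hφ0 (hF j)
    have n2 := hφ0 hcj
    have hy : s j * δ * φ (F j) / φ (c j) ∈ R := by
      refine R.div_mem (R.mul_mem ?_ (hmem _)) (hmem _)
      rw [hδ, ← mul_div_assoc, ← mul_assoc]
      exact R.div_mem (R.mul_mem (hR j i0) (hmem _)) (R.mul_mem (hmem _) (hmem _))
    obtain ⟨y0, hy0⟩ := hy
    have hy2 : (s j * δ * φ (F j) / φ (c j)) ^ 2 = φ (d * (F j * c j)) := by
      rw [div_pow, mul_pow, mul_pow, hδ2, hs, map_mul, map_mul]
      field_simp
    rw [← hy0, ← hφa, amap, ← map_pow] at hy2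
    have hy3 := (algebraMap (RatFunc k) (AlgebraicClosure (RatFunc k))).injective hy2
    obtain ⟨h, hh⟩ := IsIntegrallyClosed.exists_algebraMap_eq_of_isIntegral_pow (R := k[X])
      (x := y0) (n := 2) (by norm_num) (by rw [hy3]; exact isIntegral_algebraMap)
    rw [← hh, ← map_pow] at hy3
    have hy4 := IsFractionRing.injective k[X] (RatFunc k) hy3
    obtain ⟨e, rfl⟩ := hd.isRadical 2 h ⟨_, hy4⟩
    refine ⟨e, ?_, ?_⟩
    · apply mul_left_cancel₀ hd0; rw [← hy4]; ring
    · have : φ (d * e) = s j * δ * φ (F j) / φ (c j) := by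
        rw [← hφa, amap, hh]; exact hy0
      rw [eq_div_iff n2, map_mul, ← hδ2] at this
      apply mul_left_cancel₀ hδ0
      linear_combination -this
  choose e he1 he2 using hex
  refine ⟨d, e, hd0, he1, ?_⟩
  have hPi : ∀ j, φ (F j) ^ 2 * φ (aco F j) = φ (∏ l, F l ^ 2) := by
    intro j
    rw [← map_pow, ← map_mul, aco, Finset.mul_prod_erase _ (fun l => F l ^ 2) (Finset.mem_univ j)]
  have hj : ∀ j, s j * φ (∏ l, F l ^ 2) = δ * φ d * φ (aco F j * e j ^ 3) := by
    intro j
    have h1 : φ (F j) * φ (c j) = φ d * φ (e j) ^ 2 := by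
      rw [← map_mul, he1, map_mul, map_pow]
    rw [← hPi j, map_mul, map_pow]
    linear_combination φ (F j) * φ (aco F j) * he2 j + φ (e j) * δ * φ (aco F j) * h1
  have hfin : δ * φ d * φ (∑ i, aco F i * e i ^ 3) = 0 := by
    rw [map_sum, Finset.mul_sum, ← Finset.sum_congr rfl (fun j _ => hj j), ← Finset.sum_mul,
      hsum, zero_mul]
  have := (mul_eq_zero.1 hfin).resolve_left (mul_ne_zero hδ0 (hφ0 hd0))
  exact (map_eq_zero_iff φ hφ).1 this

end Algebra

section Final

open Polynomial

variable {k : Type} [Field k] [Fintype k]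

/-- Points of the cubic surface of bounded degree. -/
def solSet (F : Fin 4 → k[X]) (m : ℕ) : Finset (Fin 4 → k[X]) :=
  (Fintype.piFinset (fun _ : Fin 4 => polLE k m)).filter (fun e => ∑ i, aco F i * e i ^ 3 = 0)

lemma mem_solSet {F : Fin 4 → k[X]} {m : ℕ} {e : Fin 4 → k[X]} :
    e ∈ solSet F m ↔ (∀ i, (e i).natDegree ≤ m) ∧ ∑ i, aco F i * e i ^ 3 = 0 := by
  unfold solSet
  rw [Finset.mem_filter, Fintype.mem_piFinset]
  simp only [mem_polLE]

/-- Covering set. -/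
def coverSet (F : Fin 4 → k[X]) (N : ℕ) : Finset (Fin 4 → k[X]) :=
  (Finset.range (N + 1)).biUnion (fun D => (polLE k D ×ˢ solSet F ((N - D) / 2)).image
    (fun p => fun i => p.1 * p.2 i ^ 2 / F i))

lemma natDegree_le_of_fabsP {x : k[X]} {C : ℕ}
    (h : fabsP k x ≤ (Fintype.card k : ℝ) ^ C) : x.natDegree ≤ C := by
  by_cases hx : x = 0
  · simp [hx]
  rw [fabsP, if_neg hx] at h
  have h1 : (1 : ℝ) < Fintype.card k := by exact_mod_cast Fintype.one_lt_card
  exact (pow_le_pow_iff_right₀ h1).1 h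

lemma mem_cover (h2 : (2 : k) ≠ 0) (F c : Fin 4 → k[X]) (hF : ∀ i, F i ≠ 0) (C : ℕ)
    (hc : ∀ i, (c i).natDegree ≤ C)
    (hns : ¬ SpecialSolution k F c) (hdz : DualZero k F c) :
    c ∈ coverSet F (C + ∑ i, (F i).natDegree) := by
  obtain ⟨d, e, hd, hde, hsum⟩ := dual_factor_lemma h2 F c hF hns hdz
  have hFi : ∀ i, (F i).natDegree ≤ ∑ i, (F i).natDegree := fun i =>
    Finset.single_le_sum (f := fun i => (F i).natDegree) (fun _ _ => Nat.zero_le _)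
      (Finset.mem_univ i)
  set f := ∑ i, (F i).natDegree with hf
  have hdeg : ∀ i, e i ≠ 0 → d.natDegree + 2 * (e i).natDegree ≤ C + f := by
    intro i hi
    have h1 : (d * e i ^ 2).natDegree = d.natDegree + 2 * (e i).natDegree := by
      rw [natDegree_mul hd (pow_ne_zero _ hi), natDegree_pow]
    rw [← h1, ← hde]
    refine natDegree_mul_le.trans ?_
    have := hc i
    have := hFi i
    omega
  have hrec : c = fun i => d * e i ^ 2 / F i := by
    funext i
    rw [← hde i, mul_div_cancel_left₀ _ (hF i)]
  unfold coverSet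
  rw [Finset.mem_biUnion]
  by_cases h0 : ∀ i, e i = 0
  · refine ⟨0, by simp, ?_⟩
    rw [Finset.mem_image]
    refine ⟨(1, e), ?_, ?_⟩
    · rw [Finset.mem_product, mem_polLE, mem_solSet]
      exact ⟨by simp, fun i => by simp [h0 i], hsum⟩
    · rw [hrec]; funext i; simp [h0 i]
  · push Not at h0
    obtain ⟨i0, hi0⟩ := h0
    have := hdeg i0 hi0
    refine ⟨d.natDegree, by rw [Finset.mem_range]; omega, ?_⟩
    rw [Finset.mem_image]
    refine ⟨(d, e), ?_, hrec.symm⟩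
    rw [Finset.mem_product, mem_polLE, mem_solSet]
    refine ⟨le_rfl, fun i => ?_, hsum⟩
    by_cases hi : e i = 0
    · simp [hi]
    · have := hdeg i hi
      show (e i).natDegree ≤ (C + f - d.natDegree) / 2
      omega

lemma card_cover (h3 : (3 : k) ≠ 0) (F : Fin 4 → k[X]) (hF : ∀ i, F i ≠ 0)
    (θ : ℝ) (hθ : 1 < θ) :
    ∃ K : ℝ, 0 < K ∧ ∀ N : ℕ, ((coverSet F N).card : ℝ) ≤
      (N + 1) * (K * (Fintype.card k : ℝ) ^ (N + 1) * θ ^ (3 * N)) := by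
  obtain ⟨K, hK, hcount⟩ := four_count h3 (aco F)
    (fun i => Finset.prod_ne_zero_iff.2 fun l _ => pow_ne_zero _ (hF l)) θ hθ
  have hcount' : ∀ m, ((solSet F m).card : ℝ) ≤
      K * (Fintype.card k : ℝ) ^ (2 * m) * θ ^ (3 * m) := hcount
  refine ⟨K, hK, fun N => ?_⟩
  have h1 : (1 : ℝ) ≤ Fintype.card k := by exact_mod_cast Fintype.card_pos
  have h0 : (coverSet F N).card ≤ ∑ D ∈ Finset.range (N + 1),
      (polLE k D).card * (solSet F ((N - D) / 2)).card := by
    unfold coverSet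
    refine Finset.card_biUnion_le.trans (Finset.sum_le_sum fun D _ => ?_)
    refine Finset.card_image_le.trans ?_
    rw [Finset.card_product]
  calc ((coverSet F N).card : ℝ) ≤ ∑ D ∈ Finset.range (N + 1),
      ((polLE k D).card : ℝ) * (solSet F ((N - D) / 2)).card := by exact_mod_cast h0
    _ ≤ ∑ D ∈ Finset.range (N + 1), K * (Fintype.card k : ℝ) ^ (N + 1) * θ ^ (3 * N) := by
        refine Finset.sum_le_sum fun D hD => ?_
        rw [Finset.mem_range] at hD
        have hp : ((polLE k D).card : ℝ) ≤ (Fintype.card k : ℝ) ^ (D + 1) := by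
          exact_mod_cast card_polLE D
        set m := (N - D) / 2 with hm
        calc ((polLE k D).card : ℝ) * (solSet F m).card
            ≤ (Fintype.card k : ℝ) ^ (D + 1) *
              (K * (Fintype.card k : ℝ) ^ (2 * m) * θ ^ (3 * m)) := by
                gcongr; exact hcount' m
          _ = K * (Fintype.card k : ℝ) ^ (D + 1 + 2 * m) * θ ^ (3 * m) := by
                rw [pow_add _ (D + 1)]; ring
          _ ≤ _ := by
                have g1 : (Fintype.card k : ℝ) ^ (D + 1 + 2 * m) ≤
                    (Fintype.card k : ℝ) ^ (N + 1) := pow_le_pow_right₀ h1 (by omega)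
                have g2 : θ ^ (3 * m) ≤ θ ^ (3 * N) := pow_le_pow_right₀ hθ.le (by omega)
                gcongr
    _ = _ := by rw [Finset.sum_const, Finset.card_range]; push_cast; ring

end Final

/-- For a non-singular diagonal cubic in 4 variables over `F_q[t]` with
`char F_q(t) > 3`, the number of ordinary (i.e. non-special) zeros of the dual
form of height at most `Ĉ = q^C` is `O_ε(Ĉ^{1+ε})`. -/
theorem ordinary_dual_zero_count_four_variables
    (hchar : 3 < ringChar Fq)
    (F : Fin 4 → Polynomial Fq) (hF : ∀ i, F i ≠ 0)
    (ε : ℝ) (hε : 0 < ε) :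
    ∃ K : ℝ, 0 < K ∧ ∀ Cexp : ℕ,
      (Nat.card {c : Fin 4 → Polynomial Fq //
          (∀ i, fabsP Fq (c i) ≤ (Fintype.card Fq : ℝ) ^ Cexp) ∧
          DualZero Fq F c ∧ ¬ SpecialSolution Fq F c} : ℝ)
        ≤ K * ((Fintype.card Fq : ℝ) ^ Cexp) ^ ((1 : ℝ) + ε) := by
  have hne : ∀ n : ℕ, 0 < n → n < ringChar Fq → (n : Fq) ≠ 0 := by
    intro n hn hlt h
    have := (ringChar.spec Fq n).1 h
    exact absurd (Nat.le_of_dvd hn this) (by omega)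
  have h2 : (2 : Fq) ≠ 0 := by exact_mod_cast hne 2 (by norm_num) (by omega)
  have h3 : (3 : Fq) ≠ 0 := by exact_mod_cast hne 3 (by norm_num) (by omega)
  set q : ℝ := (Fintype.card Fq : ℝ) with hq
  have hq1 : 1 < q := by rw [hq]; exact_mod_cast Fintype.one_lt_card
  have hq0 : 0 < q := by linarith
  set θ : ℝ := q ^ (ε / 4) with hθdef
  have hθ : 1 < θ := Real.one_lt_rpow hq1 (by positivity)
  have hθ0 : 0 < θ := by linarith
  obtain ⟨K, hK, hcov⟩ := card_cover h3 F hF θ hθ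
  rw [← hq] at hcov
  set A : ℝ := max 1 (1 / (θ - 1)) with hA
  have hA1 : 1 ≤ A := le_max_left _ _
  have hA2 : 1 ≤ A * (θ - 1) := by
    have : 1 / (θ - 1) ≤ A := le_max_right _ _
    rwa [div_le_iff₀ (by linarith)] at this
  have hAi : ∀ i : ℕ, (i : ℝ) + 1 ≤ A * θ ^ i := by
    intro i
    have h1 := one_add_mul_le_pow (a := θ - 1) (by linarith) i
    have h2 : θ ^ i ≥ 1 + i * (θ - 1) := by simpa using h1
    have h3 : A * (1 + i * (θ - 1)) ≤ A * θ ^ i := by gcongr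
    have hi : (0 : ℝ) ≤ i := by positivity
    nlinarith
  set f : ℕ := ∑ i, (F i).natDegree with hf
  refine ⟨(f + 1) * A * K * q ^ (f + 1) * θ ^ (3 * f), by positivity, fun C => ?_⟩
  have hle : Nat.card {c : Fin 4 → Polynomial Fq //
          (∀ i, fabsP Fq (c i) ≤ q ^ C) ∧
          DualZero Fq F c ∧ ¬ SpecialSolution Fq F c} ≤ (coverSet F (C + f)).card := by
    have := Nat.card_mono (Finset.finite_toSet (coverSet F (C + f)))
      (s := {c : Fin 4 → Polynomial Fq | (∀ i, fabsP Fq (c i) ≤ q ^ C) ∧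
          DualZero Fq F c ∧ ¬ SpecialSolution Fq F c})
      (fun c hc => mem_cover h2 F c hF C (fun i => natDegree_le_of_fabsP (hc.1 i)) hc.2.2 hc.2.1)
    refine this.trans (le_of_eq ?_)
    simp
  have hpow : (q ^ C) ^ ((1 : ℝ) + ε) = q ^ C * θ ^ (4 * C) := by
    rw [Real.rpow_add (by positivity), Real.rpow_one, hθdef, ← Real.rpow_natCast q C,
      ← Real.rpow_mul hq0.le, ← Real.rpow_natCast (q ^ (ε / 4)), ← Real.rpow_mul hq0.le]
    congr 2
    push_cast; ring
  have hN : ((C + f : ℕ) : ℝ) + 1 ≤ (f + 1) * (A * θ ^ C) := by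
    have h1 := hAi C
    have h4 : ((C + f : ℕ) : ℝ) + 1 ≤ (f + 1) * (C + 1) := by
      push_cast
      have : (0 : ℝ) ≤ f * C := by positivity
      nlinarith
    refine h4.trans ?_
    gcongr
  rw [hpow]
  calc _ ≤ ((coverSet F (C + f)).card : ℝ) := by exact_mod_cast hle
    _ ≤ _ := hcov (C + f)
    _ ≤ ((f + 1) * (A * θ ^ C)) * (K * q ^ (C + f + 1) * θ ^ (3 * (C + f))) := by
        gcongr
    _ = _ := by ring
end
end
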